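/- Let α ∈ (2,3), n ≥ 2, and let γ ∈ H^{(1+α)/2,2}(ℝ/ℤ,ℝⁿ) be injective and parametrized by arc-length. Then for every h ∈ H^{(1+α)/2,2}(ℝ/ℤ,ℝⁿ) the directional derivative of E^α at γ in direction h exists and equals the principal value δE^α(γ;h) = lim_{ε↘0} ∬_{U_ε} [ (α−2)·⟨γ'(u),h'(u)⟩/|w|^α + 2·⟨γ'(u),h'(u)⟩/|γ(u+w)−γ(u)|^α − α·⟨γ(u+w)−γ(u), h(u+w)−h(u)⟩/|γ(u+w)−γ(u)|^{α+2} ] dw du, and in particular this limit exists. -/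

import Mathlib

open MeasureTheory Filter Set
open scoped RealInnerProductSpace ENNReal Topology

noncomputable section

/-- `ℝⁿ` -/
abbrev Rn (n : ℕ) := EuclideanSpace ℝ (Fin n)

variable {n : ℕ}

/-- A 1-periodic curve is injective as a map on `ℝ/ℤ`. -/
def PerInjective (γ : ℝ → Rn n) : Prop :=
  ∀ u v : ℝ, γ u = γ v → ∃ k : ℤ, v = u + k

/-- `γ` is a regular curve: `γ'(u) ≠ 0` for all `u`. -/
def RegularCurve (γ : ℝ → Rn n) : Prop := ∀ u : ℝ, deriv γ u ≠ 0

/-- `γ` is parametrized by arc-length: `|γ'(u)| = 1` for all `u`. -/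
def ArcLengthParam (γ : ℝ → Rn n) : Prop := ∀ u : ℝ, ‖deriv γ u‖ = 1

/-- The length `L(γ) = ∫₀¹ |γ'(θ)| dθ` of the closed curve `γ`. -/
def curveLen (γ : ℝ → Rn n) : ℝ := ∫ θ in (0:ℝ)..1, ‖deriv γ θ‖

/-- The arc length `L(γ|_{[u,u+w]}) = |∫_u^{u+w} |γ'(θ)| dθ|`. -/
def arcLen (γ : ℝ → Rn n) (u w : ℝ) : ℝ := |∫ θ in u..(u + w), ‖deriv γ θ‖|

/-- The intrinsic distance `d_γ(u+w,u)`. -/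
def idist (γ : ℝ → Rn n) (u w : ℝ) : ℝ :=
  min (arcLen γ u w) (curveLen γ - arcLen γ u w)

/-- The integrand of the O'Hara energy `E^α`. -/
def ohIntegrand (α : ℝ) (γ : ℝ → Rn n) (u w : ℝ) : ℝ :=
  (1 / ‖γ (u + w) - γ u‖ ^ α - 1 / idist γ u w ^ α) * ‖deriv γ (u + w)‖ * ‖deriv γ u‖

/-- The O'Hara energy `E^α`, with values in `[0,∞]`. -/
def oharaE (α : ℝ) (γ : ℝ → Rn n) : ℝ≥0∞ :=
  ∫⁻ u in Ioc (0:ℝ) 1, ∫⁻ w in Ioo (-(1:ℝ)/2) (1/2), ENNReal.ofReal (ohIntegrand α γ u w)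

/-- The O'Hara energy `E^α` as a real number. -/
def oharaER (α : ℝ) (γ : ℝ → Rn n) : ℝ := (oharaE α γ).toReal

/-- `[−1/2,−ε] ∪ [ε,1/2]`, the `w`-section of `U_ε`. -/
def Wset (ε : ℝ) : Set ℝ := Icc (-(1:ℝ)/2) (-ε) ∪ Icc ε (1/2)

/-- The truncated O'Hara energy `E^α_ε`, an integral over `U_ε`. -/
def oharaEeps (α ε : ℝ) (γ : ℝ → Rn n) : ℝ :=
  ∫ u in Ioc (0:ℝ) 1, ∫ w in Wset ε, ohIntegrand α γ u w

/-- `F` has directional (Gâteaux) derivative `d` at `γ` in direction `h`. -/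
def HasDirDeriv (F : (ℝ → Rn n) → ℝ) (γ h : ℝ → Rn n) (d : ℝ) : Prop :=
  Tendsto (fun τ : ℝ => (F (γ + τ • h) - F γ) / τ) (𝓝[≠] (0:ℝ)) (𝓝 d)

/-- Squared Gagliardo seminorm `[f]²_{H^{s,2}}` of a 1-periodic map. -/
def gagliardoSq (s : ℝ) {E : Type*} [NormedAddCommGroup E] (f : ℝ → E) : ℝ≥0∞ :=
  ∫⁻ u in Ioc (0:ℝ) 1, ∫⁻ w in Ioo (-(1:ℝ)/2) (1/2),
    ENNReal.ofReal (‖f (u + w) - f u‖ ^ 2 / |w| ^ (1 + 2 * s))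

/-- Membership in the fractional Sobolev space `H^{1+σ,2}(ℝ/ℤ,ℝⁿ)`, `σ ∈ (0,1)`:
a 1-periodic `C¹` function whose derivative has finite Gagliardo seminorm of order `σ`. -/
def MemH1 (σ : ℝ) (γ : ℝ → Rn n) : Prop :=
  Function.Periodic γ 1 ∧ ContDiff ℝ 1 γ ∧ gagliardoSq σ (deriv γ) < ⊤

/-- The norm of `H^{1+σ,2}(ℝ/ℤ,ℝⁿ)`. -/
def H1Norm (σ : ℝ) (γ : ℝ → Rn n) : ℝ :=
  Real.sqrt (∫ u in Ioc (0:ℝ) 1, (‖γ u‖ ^ 2 + ‖deriv γ u‖ ^ 2)) +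
    Real.sqrt ((gagliardoSq σ (deriv γ)).toReal)

/-- Membership of a 1-periodic map in `L²(ℝ/ℤ)`. -/
def MemL2per {E : Type*} [NormedAddCommGroup E] (f : ℝ → E) : Prop :=
  Function.Periodic f 1 ∧ AEStronglyMeasurable f (volume : Measure ℝ) ∧
    IntegrableOn (fun u => ‖f u‖ ^ 2) (Ioc (0:ℝ) 1) volume

/-- Membership in the fractional Sobolev space `H^{s,2}(ℝ/ℤ)`, `s ∈ (0,1)`. -/
def MemHs0 (s : ℝ) {E : Type*} [NormedAddCommGroup E] (f : ℝ → E) : Prop :=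
  MemL2per f ∧ gagliardoSq s f < ⊤

/-- The norm of `H^{s,2}(ℝ/ℤ)` for `s ∈ (0,1)`: `‖f‖_{L²} + [f]_{H^{s,2}}`. -/
def Hs0Norm (s : ℝ) {E : Type*} [NormedAddCommGroup E] (f : ℝ → E) : ℝ :=
  Real.sqrt (∫ u in Ioc (0:ℝ) 1, ‖f u‖ ^ 2) + Real.sqrt ((gagliardoSq s f).toReal)

/-- The `k`-th Fourier coefficient (`j`-th component) of a 1-periodic curve. -/
def fCoef (γ : ℝ → Rn n) (k : ℤ) (j : Fin n) : ℂ :=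
  ∫ u in (0:ℝ)..1, (γ u j : ℂ) * Complex.exp ((-2) * (Real.pi : ℂ) * Complex.I * (k : ℂ) * (u : ℂ))

/-- Membership in `H^{s,2}(ℝ/ℤ,ℝⁿ)` via the Fourier characterization:
`((1+|k|²)^{s/2} γ̂(k))_k ∈ ℓ²`. -/
def MemHF (s : ℝ) (γ : ℝ → Rn n) : Prop :=
  Function.Periodic γ 1 ∧ Continuous γ ∧
    Summable (fun k : ℤ => (1 + (k : ℝ) ^ 2) ^ s * ∑ j, ‖fCoef γ k j‖ ^ 2)

/-- The squared Fourier norm of `H^{s,2}(ℝ/ℤ,ℝⁿ)`. -/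
def fNormSq (s : ℝ) (γ : ℝ → Rn n) : ℝ :=
  ∑' k : ℤ, (1 + (k : ℝ) ^ 2) ^ s * ∑ j, ‖fCoef γ k j‖ ^ 2

/-- C¹-norm of a 1-periodic map. -/
def c1Norm (f : ℝ → Rn n) : ℝ := ⨆ u : Icc (0:ℝ) 1, (‖f u.1‖ + ‖deriv f u.1‖)

/-- The integrand of `Q(γ,h)`. -/
def Qintegrand (α : ℝ) (γ h : ℝ → Rn n) (u w : ℝ) : ℝ :=
  ⟪deriv γ u, deriv h u⟫ / |w| ^ α
    - ⟪γ (u + w) - γ u, h (u + w) - h u⟫ / |w| ^ (α + 2)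

/-- The integrand of `R(γ,h)`. -/
def Rintegrand (α : ℝ) (γ h : ℝ → Rn n) (u w : ℝ) : ℝ :=
  2 * ⟪deriv γ u, deriv h u⟫ * (1 / ‖γ (u + w) - γ u‖ ^ α - 1 / |w| ^ α)
    - α * ⟪γ (u + w) - γ u, h (u + w) - h u⟫ *
        (1 / ‖γ (u + w) - γ u‖ ^ (α + 2) - 1 / |w| ^ (α + 2))

/-- `R(γ,h)`, an absolutely convergent double integral over `(ℝ/ℤ) × [−1/2,1/2]`. -/
def Rval (α : ℝ) (γ h : ℝ → Rn n) : ℝ :=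
  ∫ p in (Ioc (0:ℝ) 1) ×ˢ (Icc (-(1:ℝ)/2) (1/2)), Rintegrand α γ h p.1 p.2

/-- `f` is bounded by `K` and `K`-Lipschitz on `T`. -/
def BddLipOn (K : ℝ) (T : Set ℝ) (f : ℝ → ℝ) : Prop :=
  (∀ t ∈ T, |f t| ≤ K) ∧ ∀ t ∈ T, ∀ s ∈ T, |f t - f s| ≤ K * |t - s|

namespace BddLipOn

variable {K K₁ K₂ : ℝ} {T : Set ℝ} {f g : ℝ → ℝ}

lemma mono (hf : BddLipOn K₁ T f) (h : K₁ ≤ K₂) : BddLipOn K₂ T f :=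
  ⟨fun t ht => (hf.1 t ht).trans h, fun t ht s hs =>
    (hf.2 t ht s hs).trans (mul_le_mul_of_nonneg_right h (abs_nonneg _))⟩

lemma congr (hf : BddLipOn K T f) (h : ∀ t ∈ T, g t = f t) : BddLipOn K T g :=
  ⟨fun t ht => by rw [h t ht]; exact hf.1 t ht, fun t ht s hs => by
    rw [h t ht, h s hs]; exact hf.2 t ht s hs⟩

lemma add (hf : BddLipOn K₁ T f) (hg : BddLipOn K₂ T g) :
    BddLipOn (K₁ + K₂) T (fun t => f t + g t) := by
  refine ⟨fun t ht => (abs_add_le _ _).trans (add_le_add (hf.1 t ht) (hg.1 t ht)),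
    fun t ht s hs => ?_⟩
  have h1 := hf.2 t ht s hs
  have h2 := hg.2 t ht s hs
  rw [abs_le] at *
  constructor <;> linarith [h1.1, h1.2, h2.1, h2.2]

lemma neg (hf : BddLipOn K T f) : BddLipOn K T (fun t => -f t) := by
  refine ⟨fun t ht => by rw [abs_neg]; exact hf.1 t ht, fun t ht s hs => ?_⟩
  rw [← abs_neg]
  convert hf.2 t ht s hs using 2
  ring

lemma sub (hf : BddLipOn K₁ T f) (hg : BddLipOn K₂ T g) :
    BddLipOn (K₁ + K₂) T (fun t => f t - g t) := by
  simpa only [sub_eq_add_neg] using hf.add hg.neg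

lemma mul (hf : BddLipOn K₁ T f) (hg : BddLipOn K₂ T g) :
    BddLipOn (2 * (K₁ * K₂)) T (fun t => f t * g t) := by
  have key : ∀ t ∈ T, |f t * g t| ≤ K₁ * K₂ := fun t ht => by
    rw [abs_mul]
    exact mul_le_mul (hf.1 t ht) (hg.1 t ht) (abs_nonneg _) ((abs_nonneg _).trans (hf.1 t ht))
  refine ⟨fun t ht => ?_, fun t ht s hs => ?_⟩
  · linarith [key t ht, abs_nonneg (f t * g t)]
  · have h1 := hf.2 t ht s hs
    have h2 := hg.2 t ht s hs
    have e : f t * g t - f s * g s = f t * (g t - g s) + (f t - f s) * g s := by ring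
    have i1 : |f t * (g t - g s)| ≤ K₁ * (K₂ * |t - s|) := by
      rw [abs_mul]
      exact mul_le_mul (hf.1 t ht) h2 (abs_nonneg _) ((abs_nonneg _).trans (hf.1 t ht))
    have i2 : |(f t - f s) * g s| ≤ K₁ * |t - s| * K₂ := by
      rw [abs_mul]
      exact mul_le_mul h1 (hg.1 s hs) (abs_nonneg _) ((abs_nonneg _).trans h1)
    rw [e]
    refine (abs_add_le _ _).trans ?_
    linarith

lemma const_mul (hf : BddLipOn K T f) (c : ℝ) : BddLipOn (|c| * K) T (fun t => c * f t) := by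
  refine ⟨fun t ht => ?_, fun t ht s hs => ?_⟩
  · rw [abs_mul]
    exact mul_le_mul_of_nonneg_left (hf.1 t ht) (abs_nonneg _)
  · rw [← mul_sub, abs_mul, mul_assoc]
    exact mul_le_mul_of_nonneg_left (hf.2 t ht s hs) (abs_nonneg _)

lemma min (hf : BddLipOn K T f) (hg : BddLipOn K T g) :
    BddLipOn K T (fun t => min (f t) (g t)) := by
  refine ⟨fun t ht => ?_, fun t ht s hs => ?_⟩
  · rcases min_choice (f t) (g t) with h | h <;> simp only [h]
    exacts [hf.1 t ht, hg.1 t ht]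
  · exact (abs_min_sub_min_le_max _ _ _ _).trans (max_le (hf.2 t ht s hs) (hg.2 t ht s hs))

lemma rpow_neg {c p : ℝ} (hc : 0 < c) (hp : 0 ≤ p) (hf : BddLipOn K T f)
    (hcf : ∀ t ∈ T, c ≤ f t) :
    BddLipOn (c ^ (-p) + p * c ^ (-p - 1) * K) T (fun t => f t ^ (-p)) := by
  have hc1 : 0 ≤ c ^ (-p) := Real.rpow_nonneg hc.le _
  have hc2 : 0 ≤ p * c ^ (-p - 1) := mul_nonneg hp (Real.rpow_nonneg hc.le _)
  refine ⟨fun t ht => ?_, fun t ht s hs => ?_⟩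
  · have hK : 0 ≤ K := (abs_nonneg _).trans (hf.1 t ht)
    rw [abs_of_nonneg (Real.rpow_nonneg (hc.le.trans (hcf t ht)) _)]
    have := Real.rpow_le_rpow_of_nonpos hc (hcf t ht) (neg_nonpos.2 hp)
    nlinarith [mul_nonneg hc2 hK]
  · have key := (convex_Ici c).norm_image_sub_le_of_norm_hasDerivWithin_le
      (f := fun x : ℝ => x ^ (-p)) (f' := fun x => -p * x ^ (-p - 1))
      (C := p * c ^ (-p - 1)) (x := f s) (y := f t)
      (fun x hx => (Real.hasDerivAt_rpow_const
        (Or.inl (hc.trans_le (mem_Ici.1 hx)).ne')).hasDerivWithinAt)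
      (fun x hx => by
        rw [norm_mul, norm_neg, Real.norm_of_nonneg hp,
          Real.norm_of_nonneg (Real.rpow_nonneg (hc.le.trans hx) _)]
        exact mul_le_mul_of_nonneg_left
          (Real.rpow_le_rpow_of_nonpos hc hx (by linarith)) hp)
      (hcf s hs) (hcf t ht)
    simp only [Real.norm_eq_abs] at key
    have h3 := mul_le_mul_of_nonneg_left (hf.2 t ht s hs) hc2
    nlinarith [mul_nonneg hc1 (abs_nonneg (t - s))]

lemma integral {k : ℝ → ℝ} {F : ℝ → ℝ → ℝ} (hF : ∀ x ∈ Icc (0 : ℝ) 1, BddLipOn (k x) T (F x))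
    (hk : IntervalIntegrable k volume 0 1)
    (hFi : ∀ t ∈ T, IntervalIntegrable (fun x => F x t) volume 0 1) :
    BddLipOn (∫ x in (0 : ℝ)..1, k x) T (fun t => ∫ x in (0 : ℝ)..1, F x t) := by
  refine ⟨fun t ht => ?_, fun t ht s hs => ?_⟩
  · rw [← Real.norm_eq_abs]
    refine intervalIntegral.norm_integral_le_of_norm_le zero_le_one ?_ hk
    exact Eventually.of_forall fun x hx => (hF x (Ioc_subset_Icc_self hx)).1 t ht
  · rw [← Real.norm_eq_abs, ← intervalIntegral.integral_sub (hFi t ht) (hFi s hs),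
      ← intervalIntegral.integral_mul_const]
    refine intervalIntegral.norm_integral_le_of_norm_le zero_le_one ?_ (hk.mul_const _)
    exact Eventually.of_forall fun x hx => (hF x (Ioc_subset_Icc_self hx)).2 t ht s hs

variable {E : Type*} [NormedAddCommGroup E] [InnerProductSpace ℝ E]

lemma norm_affine (hT : ∀ t ∈ T, |t| ≤ 1) (a b : E) :
    BddLipOn (‖a‖ + ‖b‖) T (fun t => ‖a + t • b‖) := by
  refine ⟨fun t ht => ?_, fun t ht s hs => ?_⟩
  · rw [abs_norm]
    refine (norm_add_le _ _).trans ?_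
    rw [norm_smul, Real.norm_eq_abs]
    nlinarith [hT t ht, norm_nonneg b]
  · refine (abs_norm_sub_norm_le _ _).trans ?_
    rw [add_sub_add_left_eq_sub, ← sub_smul, norm_smul, Real.norm_eq_abs]
    nlinarith [mul_nonneg (norm_nonneg a) (abs_nonneg (t - s))]

lemma inner_affine (hT : ∀ t ∈ T, |t| ≤ 1) (a b a' b' : E) :
    BddLipOn (2 * ((‖a‖ + ‖b‖) * (‖a'‖ + ‖b'‖))) T (fun t => ⟪a + t • b, a' + t • b'⟫) := by
  have n : ∀ a b : E, ∀ t ∈ T, ‖a + t • b‖ ≤ ‖a‖ + ‖b‖ := fun a b t ht =>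
    (le_abs_self _).trans ((norm_affine hT a b).1 t ht)
  have l : ∀ a b : E, ∀ t s : ℝ, ‖(a + t • b) - (a + s • b)‖ ≤ (‖a‖ + ‖b‖) * |t - s| := by
    intro a b t s
    rw [add_sub_add_left_eq_sub, ← sub_smul, norm_smul, Real.norm_eq_abs]
    nlinarith [mul_nonneg (norm_nonneg a) (abs_nonneg (t - s))]
  refine ⟨fun t ht => ?_, fun t ht s hs => ?_⟩
  · have := mul_le_mul (n a b t ht) (n a' b' t ht) (norm_nonneg _) (by positivity)
    have := abs_real_inner_le_norm (a + t • b) (a' + t • b')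
    nlinarith [abs_nonneg (⟪a + t • b, a' + t • b'⟫ : ℝ)]
  · have e : (⟪a + t • b, a' + t • b'⟫ : ℝ) - ⟪a + s • b, a' + s • b'⟫
        = ⟪a + t • b, (a' + t • b') - (a' + s • b')⟫
          + ⟪(a + t • b) - (a + s • b), a' + s • b'⟫ := by
      rw [inner_sub_right, inner_sub_left]; ring
    rw [e]
    refine (abs_add_le _ _).trans ((add_le_add (abs_real_inner_le_norm _ _)
      (abs_real_inner_le_norm _ _)).trans ?_)
    have i1 := mul_le_mul (n a b t ht) (l a' b' t s) (norm_nonneg _) (by positivity)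
    have i2 := mul_le_mul (l a b t s) (n a' b' s hs) (norm_nonneg _) (by positivity)
    linarith

/-- The defect in the Cauchy-Schwarz inequality is controlled quadratically. -/
lemma cauchySchwarz_defect {c B : ℝ} (hc : 0 < c) (hT : ∀ t ∈ T, |t| ≤ 1) {a b a₀ b₀ : E}
    (ha : ‖a‖ + ‖b‖ ≤ B) (ha₀ : ‖a₀‖ + ‖b₀‖ ≤ B)
    (hca : ∀ t ∈ T, c ≤ ‖a + t • b‖) (hca₀ : ∀ t ∈ T, c ≤ ‖a₀ + t • b₀‖) :
    BddLipOn ((2 + 128 * B ^ 2 * ((2 * c) ^ (-1 : ℝ) + 1 * (2 * c) ^ (-1 - 1 : ℝ) * (B + B)) ^ 2)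
        * (‖a - a₀‖ ^ 2 + ‖b - b₀‖ ^ 2)) T
      (fun t => ‖a + t • b‖ * ‖a₀ + t • b₀‖ - ⟪a + t • b, a₀ + t • b₀⟫) := by
  set K := (2 * c) ^ (-1 : ℝ) + 1 * (2 * c) ^ (-1 - 1 : ℝ) * (B + B) with hK
  have hB : 0 ≤ B := le_trans (by positivity) ha
  have hK0 : 0 ≤ K := by positivity
  set X := ‖a - a₀‖ + ‖b - b₀‖ with hX
  have hX0 : 0 ≤ X := by positivity
  have hinv := (((norm_affine hT a b).mono ha).add ((norm_affine hT a₀ b₀).mono ha₀)).rpow_neg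
    (c := 2 * c) (p := 1) (by positivity) zero_le_one
    (fun t ht => by linarith [hca t ht, hca₀ t ht])
  have hnum := (inner_affine hT (a - a₀) (b - b₀) (a + a₀) (b + b₀)).mono
    (K₂ := 4 * (X * B)) (by
      have : ‖a + a₀‖ + ‖b + b₀‖ ≤ 2 * B := by
        linarith [norm_add_le a a₀, norm_add_le b b₀]
      nlinarith)
  have hD : BddLipOn (2 * (4 * (X * B) * K)) T (fun t => ‖a + t • b‖ - ‖a₀ + t • b₀‖) := by
    refine (hnum.mul hinv).congr fun t ht => ?_
    have hpos : 0 < ‖a + t • b‖ + ‖a₀ + t • b₀‖ := by linarith [hca t ht, hca₀ t ht]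
    have e1 : a - a₀ + t • (b - b₀) = (a + t • b) - (a₀ + t • b₀) := by module
    have e2 : a + a₀ + t • (b + b₀) = (a + t • b) + (a₀ + t • b₀) := by module
    rw [Real.rpow_neg_one, ← div_eq_mul_inv, eq_div_iff hpos.ne', e1, e2]
    generalize a + t • b = v
    generalize a₀ + t • b₀ = v₀
    rw [inner_sub_left, inner_add_right, inner_add_right, real_inner_self_eq_norm_sq,
      real_inner_self_eq_norm_sq, real_inner_comm v v₀]
    ring
  have hS := inner_affine hT (a - a₀) (b - b₀) (a - a₀) (b - b₀)
  refine (((hS.sub (hD.mul hD)).const_mul (1 / 2)).mono ?_).congr fun t ht => ?_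
  · rw [← hX, abs_of_pos (by norm_num : (0 : ℝ) < 1 / 2)]
    have hX2 : X ^ 2 ≤ 2 * (‖a - a₀‖ ^ 2 + ‖b - b₀‖ ^ 2) := by
      nlinarith [sq_nonneg (‖a - a₀‖ - ‖b - b₀‖)]
    have h1 : 0 ≤ 1 + 64 * B ^ 2 * K ^ 2 := by positivity
    linarith [mul_le_mul_of_nonneg_left hX2 h1]
  · have e1 : a - a₀ + t • (b - b₀) = (a + t • b) - (a₀ + t • b₀) := by module
    rw [e1, inner_sub_left, inner_sub_right, inner_sub_right, real_inner_self_eq_norm_sq,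
      real_inner_self_eq_norm_sq, real_inner_comm (a + t • b)]
    ring

end BddLipOn

lemma rpow_neg_sub_rpow_neg {α r s : ℝ} (hα : 0 < α) (hr : 0 < r) (hs : 0 < s) :
    s ^ (-α) - r ^ (-α)
      = α * ((r - s) * ∫ θ in (0 : ℝ)..1, (s + (r - s) * θ) ^ (-(α + 1))) := by
  rw [intervalIntegral.mul_integral_comp_add_mul (f := fun x : ℝ => x ^ (-(α + 1))), mul_zero,
    add_zero, mul_one, add_sub_cancel, integral_rpow]
  · have : -(α + 1) + 1 = -α := by ring
    rw [this]
    field_simp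
    ring
  · refine Or.inr ⟨by linarith, fun h => ?_⟩
    rw [mem_uIcc] at h
    rcases h with h | h <;> linarith [h.1, h.2]

lemma sq_norm_integral_le {E : Type*} [NormedAddCommGroup E] [NormedSpace ℝ E] {f : ℝ → E}
    (hf : Continuous f) : ‖∫ x in (0 : ℝ)..1, f x‖ ^ 2 ≤ ∫ x in (0 : ℝ)..1, ‖f x‖ ^ 2 := by
  set c := ∫ x in (0 : ℝ)..1, ‖f x‖ with hc
  have h1 : ‖∫ x in (0 : ℝ)..1, f x‖ ≤ c :=
    intervalIntegral.norm_integral_le_integral_norm zero_le_one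
  have hi : ∀ g : ℝ → ℝ, Continuous g → IntervalIntegrable g volume 0 1 :=
    fun g hg => hg.intervalIntegrable _ _
  have h2 : 0 ≤ ∫ x in (0 : ℝ)..1, (‖f x‖ - c) ^ 2 :=
    intervalIntegral.integral_nonneg zero_le_one fun x _ => sq_nonneg _
  have h3 : ∫ x in (0 : ℝ)..1, (‖f x‖ - c) ^ 2 = (∫ x in (0 : ℝ)..1, ‖f x‖ ^ 2) - c ^ 2 := by
    have : ∀ x, (‖f x‖ - c) ^ 2 = ‖f x‖ ^ 2 - 2 * c * ‖f x‖ + c ^ 2 := fun x => by ring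
    simp only [this]
    rw [intervalIntegral.integral_add (hi _ (by fun_prop)) (hi _ (by fun_prop)),
      intervalIntegral.integral_sub (hi _ (by fun_prop)) (hi _ (by fun_prop)),
      intervalIntegral.integral_const_mul, ← hc, intervalIntegral.integral_const]
    simp
    ring
  nlinarith [norm_nonneg (∫ x in (0 : ℝ)..1, f x)]

/-- The difference between the inverse powers of the chord and of the arc, rescaled to unit
parameter length, is controlled by the mean square oscillation. -/
lemma exists_bddLipOn_chord_arc (E : Type*) [NormedAddCommGroup E] [InnerProductSpace ℝ E]
    [CompleteSpace E] {c B α : ℝ} (hc : 0 < c) (hα : 0 < α) :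
    ∃ K : ℝ, 0 ≤ K ∧ ∀ (T : Set ℝ) (a b : ℝ → E) (a₀ b₀ a₁ b₁ : E), (∀ t ∈ T, |t| ≤ 1) →
      Continuous a → Continuous b → (∀ x, ‖a x‖ + ‖b x‖ ≤ B) → ‖a₀‖ + ‖b₀‖ ≤ B →
      ‖a₁‖ + ‖b₁‖ ≤ B → (∀ x, ∀ t ∈ T, c ≤ ‖a x + t • b x‖) →
      (∀ t ∈ T, c ≤ ‖a₀ + t • b₀‖) →
      (∀ t ∈ T, c ≤ ‖(∫ x in (0 : ℝ)..1, a x) + t • ∫ x in (0 : ℝ)..1, b x‖) →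
      BddLipOn (K * ∫ x in (0 : ℝ)..1, (‖a x - a₀‖ ^ 2 + ‖b x - b₀‖ ^ 2)) T (fun t =>
        (‖(∫ x in (0 : ℝ)..1, a x) + t • ∫ x in (0 : ℝ)..1, b x‖ ^ (-α)
          - (∫ x in (0 : ℝ)..1, ‖a x + t • b x‖) ^ (-α)) * ‖a₁ + t • b₁‖ * ‖a₀ + t • b₀‖) := by
  rcases lt_or_ge B 0 with hB | hB
  · refine ⟨0, le_rfl, fun T a b a₀ b₀ a₁ b₁ _ _ _ _ h => ?_⟩
    linarith [norm_nonneg a₀, norm_nonneg b₀]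
  obtain ⟨K₀, hK₀, hK₀'⟩ : ∃ K₀ : ℝ, 0 ≤ K₀ ∧ ∀ {T : Set ℝ}, (∀ t ∈ T, |t| ≤ 1) →
      ∀ {a b a₀ b₀ : E}, ‖a‖ + ‖b‖ ≤ B → ‖a₀‖ + ‖b₀‖ ≤ B → (∀ t ∈ T, c ≤ ‖a + t • b‖) →
      (∀ t ∈ T, c ≤ ‖a₀ + t • b₀‖) → BddLipOn (K₀ * (‖a - a₀‖ ^ 2 + ‖b - b₀‖ ^ 2)) T
        (fun t => ‖a + t • b‖ * ‖a₀ + t • b₀‖ - ⟪a + t • b, a₀ + t • b₀⟫) :=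
    ⟨_, by positivity, fun hT _ _ _ _ h1 h2 h3 h4 =>
      BddLipOn.cauchySchwarz_defect hc hT h1 h2 h3 h4⟩
  set K₁ : ℝ := c ^ (-(α + 1)) + (α + 1) * c ^ (-(α + 1) - 1) * (3 * B) with hK₁
  have hK₁0 : 0 ≤ K₁ := by positivity
  refine ⟨8 * α * K₀ * K₁ * B, by positivity, ?_⟩
  intro T a b a₀ b₀ a₁ b₁ hT ha hb hab hab₀ hab₁ hca hca₀ hcm
  have hi : ∀ {g : ℝ → ℝ}, Continuous g → IntervalIntegrable g volume 0 1 :=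
    fun hg => hg.intervalIntegrable _ _
  have hiE : ∀ {g : ℝ → E}, Continuous g → IntervalIntegrable g volume 0 1 :=
    fun hg => hg.intervalIntegrable _ _
  set N := ∫ x in (0 : ℝ)..1, (‖a x - a₀‖ ^ 2 + ‖b x - b₀‖ ^ 2) with hN
  set ma := ∫ x in (0 : ℝ)..1, a x with hma
  set mb := ∫ x in (0 : ℝ)..1, b x with hmb
  have hmab : ‖ma‖ + ‖mb‖ ≤ B := by
    have h1 : ‖ma‖ ≤ ∫ x in (0 : ℝ)..1, ‖a x‖ :=
      intervalIntegral.norm_integral_le_integral_norm zero_le_one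
    have h2 : ‖mb‖ ≤ ∫ x in (0 : ℝ)..1, ‖b x‖ :=
      intervalIntegral.norm_integral_le_integral_norm zero_le_one
    have h3 : ∫ x in (0 : ℝ)..1, (‖a x‖ + ‖b x‖) ≤ ∫ x in (0 : ℝ)..1, B :=
      intervalIntegral.integral_mono_on zero_le_one (hi (by fun_prop)) (hi (by fun_prop))
        fun x _ => hab x
    rw [intervalIntegral.integral_add (hi (by fun_prop)) (hi (by fun_prop)),
      intervalIntegral.integral_const] at h3
    simp at h3
    linarith
  have hVm : ‖ma - a₀‖ ^ 2 + ‖mb - b₀‖ ^ 2 ≤ N := by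
    have key : ∀ {f : ℝ → E} (f₀ : E), Continuous f →
        ‖(∫ x in (0 : ℝ)..1, f x) - f₀‖ ^ 2 ≤ ∫ x in (0 : ℝ)..1, ‖f x - f₀‖ ^ 2 := by
      intro f f₀ hf
      have := sq_norm_integral_le (f := fun x => f x - f₀) (by fun_prop)
      rwa [intervalIntegral.integral_sub (hiE hf) (hiE continuous_const),
        intervalIntegral.integral_const, sub_zero, one_smul] at this
    rw [hN, intervalIntegral.integral_add (hi (by fun_prop)) (hi (by fun_prop))]
    exact add_le_add (key a₀ ha) (key b₀ hb)
  have hs : BddLipOn B T (fun t => ‖ma + t • mb‖) := (BddLipOn.norm_affine hT ma mb).mono hmab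
  have hr : BddLipOn B T (fun t => ∫ x in (0 : ℝ)..1, ‖a x + t • b x‖) := by
    refine (BddLipOn.integral (fun x _ => (BddLipOn.norm_affine hT (a x) (b x)).mono (hab x))
      (hi continuous_const) (fun t _ => hi (by fun_prop))).mono ?_
    simp
  have hcr : ∀ t ∈ T, c ≤ ∫ x in (0 : ℝ)..1, ‖a x + t • b x‖ := by
    intro t ht
    have h3 : ∫ x in (0 : ℝ)..1, c ≤ ∫ x in (0 : ℝ)..1, ‖a x + t • b x‖ :=
      intervalIntegral.integral_mono_on zero_le_one (hi (by fun_prop)) (hi (by fun_prop))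
        fun x _ => hca x t ht
    simpa using h3
  have hdef : BddLipOn (2 * K₀ * N) T (fun t =>
      ((∫ x in (0 : ℝ)..1, ‖a x + t • b x‖) - ‖ma + t • mb‖) * ‖a₀ + t • b₀‖) := by
    have h1 := BddLipOn.integral (T := T)
      (fun x _ => hK₀' hT (hab x) hab₀ (hca x) hca₀)
      (hi (by fun_prop)) (fun t _ => hi (by fun_prop))
    have h2 := hK₀' hT hmab hab₀ hcm hca₀
    refine ((h1.sub h2).mono ?_).congr fun t _ => ?_
    · rw [intervalIntegral.integral_const_mul, ← hN]
      nlinarith [mul_le_mul_of_nonneg_left hVm hK₀]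
    · rw [intervalIntegral.integral_sub (hi (by fun_prop)) (hi (by fun_prop)),
        intervalIntegral.integral_mul_const]
      have : ∫ x in (0 : ℝ)..1, ⟪a x + t • b x, a₀ + t • b₀⟫ = ⟪ma + t • mb, a₀ + t • b₀⟫ := by
        simp only [real_inner_comm (a₀ + t • b₀)]
        have h3 := (innerSL ℝ (a₀ + t • b₀)).intervalIntegral_comp_comm (μ := volume)
          (hiE (g := fun x => a x + t • b x) (by fun_prop) )
        simp only [innerSL_apply_apply] at h3
        rw [h3, intervalIntegral.integral_add (hiE ha) (hiE (by fun_prop)),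
          intervalIntegral.integral_smul]
      rw [this]
      ring
  have hdiv : BddLipOn K₁ T (fun t => ∫ θ in (0 : ℝ)..1, (‖ma + t • mb‖
      + ((∫ x in (0 : ℝ)..1, ‖a x + t • b x‖) - ‖ma + t • mb‖) * θ) ^ (-(α + 1))) := by
    have hlow : ∀ θ ∈ Icc (0 : ℝ) 1, ∀ t ∈ T, c ≤ ‖ma + t • mb‖
        + ((∫ x in (0 : ℝ)..1, ‖a x + t • b x‖) - ‖ma + t • mb‖) * θ := by
      intro θ hθ t ht
      nlinarith [mul_nonneg (sub_nonneg.2 (hcm t ht)) (sub_nonneg.2 hθ.2),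
        mul_nonneg (sub_nonneg.2 (hcr t ht)) hθ.1]
    have hpt : ∀ θ ∈ Icc (0 : ℝ) 1, BddLipOn K₁ T (fun t => (‖ma + t • mb‖
      + ((∫ x in (0 : ℝ)..1, ‖a x + t • b x‖) - ‖ma + t • mb‖) * θ) ^ (-(α + 1))) := by
      intro θ hθ
      refine BddLipOn.rpow_neg hc (by linarith) ?_ (hlow θ hθ)
      refine ((hs.add ((hr.sub hs).const_mul θ)).mono ?_).congr fun t _ => by ring
      rw [abs_of_nonneg hθ.1]
      nlinarith [hθ.2]
    refine (BddLipOn.integral hpt (hi continuous_const) fun t ht => ?_).mono (by simp)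
    refine ContinuousOn.intervalIntegrable ?_
    rw [uIcc_of_le zero_le_one]
    refine ContinuousOn.rpow_const (by fun_prop) fun θ hθ => Or.inl ?_
    exact (hc.trans_le (hlow θ hθ t ht)).ne'
  refine ((((hdef.mul hdiv).mul ((BddLipOn.norm_affine hT a₁ b₁).mono hab₁)).const_mul α).mono
    ?_).congr fun t ht => ?_
  · rw [abs_of_pos hα]
    exact le_of_eq (by ring)
  · rw [rpow_neg_sub_rpow_neg hα (hc.trans_le (hcr t ht)) (hc.trans_le (hcm t ht))]
    ring

section Curve

variable {η : ℝ → Rn n}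

lemma chord_eq_smul_integral (hη : ContDiff ℝ 1 η) (u w : ℝ) :
    η (u + w) - η u = w • ∫ x in (0 : ℝ)..1, deriv η (u + w * x) := by
  rw [intervalIntegral.smul_integral_comp_add_mul, mul_zero, add_zero, mul_one,
    intervalIntegral.integral_deriv_eq_sub
      (fun x _ => (hη.differentiable one_ne_zero).differentiableAt)
      ((hη.continuous_deriv le_rfl).intervalIntegrable _ _)]

lemma norm_chord_eq (hη : ContDiff ℝ 1 η) (u w : ℝ) :
    ‖η (u + w) - η u‖ = |w| * ‖∫ x in (0 : ℝ)..1, deriv η (u + w * x)‖ := by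
  rw [chord_eq_smul_integral hη, norm_smul, Real.norm_eq_abs]

lemma arcLen_eq (η : ℝ → Rn n) (u w : ℝ) :
    arcLen η u w = |w| * ∫ x in (0 : ℝ)..1, ‖deriv η (u + w * x)‖ := by
  have h : 0 ≤ ∫ x in (0 : ℝ)..1, ‖deriv η (u + w * x)‖ :=
    intervalIntegral.integral_nonneg zero_le_one fun _ _ => norm_nonneg _
  rw [arcLen, ← abs_of_nonneg h, ← abs_mul,
    intervalIntegral.mul_integral_comp_add_mul (f := fun x => ‖deriv η x‖)]
  simp

lemma norm_sub_le_abs_integral (hη : ContDiff ℝ 1 η) (u v : ℝ) :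
    ‖η v - η u‖ ≤ |∫ θ in u..v, ‖deriv η θ‖| := by
  rw [← intervalIntegral.integral_deriv_eq_sub
      (fun x _ => (hη.differentiable one_ne_zero).differentiableAt)
      ((hη.continuous_deriv le_rfl).intervalIntegrable _ _)]
  exact intervalIntegral.norm_integral_le_abs_integral_norm

lemma periodic_deriv {η : ℝ → Rn n} (hp : Function.Periodic η 1) :
    Function.Periodic (deriv η) 1 := by
  intro u
  rw [← deriv_comp_add_const]
  congr 1
  exact funext hp

lemma curveLen_eq (hp : Function.Periodic η 1) (u : ℝ) :
    curveLen η = ∫ θ in u..(u + 1), ‖deriv η θ‖ := by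
  have h : Function.Periodic (fun θ => ‖deriv η θ‖) 1 := fun θ => by
    simp only [periodic_deriv hp θ]
  simpa [curveLen] using h.intervalIntegral_add_eq 0 u

lemma norm_chord_le_idist (hη : ContDiff ℝ 1 η) (hp : Function.Periodic η 1) {u w : ℝ}
    (hw : |w| ≤ 1) : ‖η (u + w) - η u‖ ≤ idist η u w := by
  have hi : ∀ a b, IntervalIntegrable (fun θ => ‖deriv η θ‖) volume a b := fun a b =>
    ((hη.continuous_deriv le_rfl).norm).intervalIntegrable _ _
  refine le_min (norm_sub_le_abs_integral hη _ _) ?_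
  rcases le_total 0 w with h0 | h0
  · rw [abs_of_nonneg h0] at hw
    rw [arcLen, abs_of_nonneg (intervalIntegral.integral_nonneg (by linarith)
      fun _ _ => norm_nonneg _), curveLen_eq hp u,
      ← intervalIntegral.integral_add_adjacent_intervals (hi u (u + w)) (hi _ _),
      add_sub_cancel_left, ← hp u, norm_sub_rev]
    refine (norm_sub_le_abs_integral hη _ _).trans_eq (abs_of_nonneg ?_)
    exact intervalIntegral.integral_nonneg (by linarith) fun _ _ => norm_nonneg _
  · rw [abs_of_nonpos h0] at hw
    have e : arcLen η u w = ∫ θ in (u + w)..u, ‖deriv η θ‖ := by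
      rw [arcLen, intervalIntegral.integral_symm, abs_neg]
      exact abs_of_nonneg (intervalIntegral.integral_nonneg (by linarith) fun _ _ => norm_nonneg _)
    have e2 : η u = η (u - 1) := by simpa using hp (u - 1)
    rw [e, curveLen_eq hp (u - 1), sub_add_cancel,
      ← intervalIntegral.integral_add_adjacent_intervals (hi (u - 1) (u + w)) (hi _ _),
      add_sub_cancel_right, e2]
    refine (norm_sub_le_abs_integral hη _ _).trans_eq (abs_of_nonneg ?_)
    exact intervalIntegral.integral_nonneg (by linarith) fun _ _ => norm_nonneg _

lemma curveLen_nonneg (η : ℝ → Rn n) : 0 ≤ curveLen η :=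
  intervalIntegral.integral_nonneg zero_le_one fun _ _ => norm_nonneg _

lemma measurable_ohIntegrand (hη : ContDiff ℝ 1 η) (α : ℝ) :
    Measurable (fun p : ℝ × ℝ => ohIntegrand α η p.1 p.2) := by
  have hc : Continuous η := hη.continuous
  have hd : Continuous (deriv η) := hη.continuous_deriv le_rfl
  have ha : Continuous (fun p : ℝ × ℝ => arcLen η p.1 p.2) := by
    simp only [arcLen_eq]
    refine continuous_snd.abs.mul ?_
    exact intervalIntegral.continuous_parametric_intervalIntegral_of_continuous' (by fun_prop) 0 1
  have hid : Continuous (fun p : ℝ × ℝ => idist η p.1 p.2) := by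
    unfold idist
    fun_prop
  unfold ohIntegrand
  refine ((Measurable.sub ?_ ?_).mul ?_).mul ?_
  · exact ((by fun_prop : Continuous fun p : ℝ × ℝ => ‖η (p.1 + p.2) - η p.1‖).measurable.pow_const
      α).const_div 1
  · exact (hid.measurable.pow_const α).const_div 1
  · exact (by fun_prop : Continuous _).measurable
  · exact (by fun_prop : Continuous _).measurable

lemma ohIntegrand_nonneg (hη : ContDiff ℝ 1 η) (hp : Function.Periodic η 1) {α : ℝ} (hα : 0 < α)
    (hinj : ∀ u w : ℝ, |w| ≤ 1 / 2 → w ≠ 0 → η (u + w) ≠ η u) {u w : ℝ} (hw : |w| ≤ 1 / 2) :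
    0 ≤ ohIntegrand α η u w := by
  rcases eq_or_ne w 0 with rfl | h0
  · simp [ohIntegrand, idist, arcLen, curveLen_nonneg, Real.zero_rpow hα.ne']
  · refine mul_nonneg (mul_nonneg (sub_nonneg.2 ?_) (norm_nonneg _)) (norm_nonneg _)
    have hpos : 0 < ‖η (u + w) - η u‖ := norm_pos_iff.2 (sub_ne_zero.2 (hinj u w hw h0))
    exact one_div_le_one_div_of_le (Real.rpow_pos_of_pos hpos _)
      (Real.rpow_le_rpow hpos.le (norm_chord_le_idist hη hp (by linarith)) hα.le)

/-- The measure on the fundamental domain `(0,1] × (-1/2,1/2)`. -/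
def torusMeasure : Measure (ℝ × ℝ) :=
  (volume.restrict (Ioc (0 : ℝ) 1)).prod (volume.restrict (Ioo (-(1 : ℝ) / 2) (1 / 2)))

instance : IsFiniteMeasure torusMeasure := by
  unfold torusMeasure
  infer_instance

lemma ae_torusMeasure : ∀ᵐ p ∂torusMeasure, p.2 ≠ 0 ∧ |p.2| < 1 / 2 := by
  have h : ∀ᵐ w ∂(volume.restrict (Ioo (-(1 : ℝ) / 2) (1 / 2))), w ≠ 0 ∧ |w| < 1 / 2 := by
    filter_upwards [ae_restrict_mem measurableSet_Ioo,
      ae_restrict_of_ae (Measure.ae_ne volume (0 : ℝ))] with w hw h0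
    exact ⟨h0, abs_lt.2 ⟨by linarith [hw.1], hw.2⟩⟩
  exact Measure.quasiMeasurePreserving_snd.ae h

lemma oharaER_eq_integral (hη : ContDiff ℝ 1 η) (hp : Function.Periodic η 1) {α : ℝ} (hα : 0 < α)
    (hinj : ∀ u w : ℝ, |w| ≤ 1 / 2 → w ≠ 0 → η (u + w) ≠ η u) :
    oharaER α η = ∫ p, ohIntegrand α η p.1 p.2 ∂torusMeasure := by
  have hm := measurable_ohIntegrand hη α
  rw [integral_eq_lintegral_of_nonneg_ae ?_ hm.aestronglyMeasurable, torusMeasure, lintegral_prod]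
  · rfl
  · exact hm.ennreal_ofReal.aemeasurable
  · filter_upwards [ae_torusMeasure] with p hp2
    exact ohIntegrand_nonneg hη hp hα hinj hp2.2.le

end Curve

lemma exists_norm_le_of_periodic {g : ℝ → Rn n} (hg : Continuous g) (hp : Function.Periodic g 1) :
    ∃ H : ℝ, 0 ≤ H ∧ ∀ u, ‖g u‖ ≤ H := by
  obtain ⟨H, hH⟩ := (hp.compact_of_continuous one_ne_zero hg).isBounded.exists_norm_le
  exact ⟨H, (norm_nonneg _).trans (hH _ ⟨0, rfl⟩), fun u => hH _ ⟨u, rfl⟩⟩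

/-- An injective closed arc-length curve is bi-Lipschitz. -/
lemma exists_le_norm_integral_deriv {γ : ℝ → Rn n} (hγ : ContDiff ℝ 1 γ)
    (hp : Function.Periodic γ 1) (hinj : PerInjective γ) (harc : ArcLengthParam γ) :
    ∃ c : ℝ, 0 < c ∧ ∀ u w : ℝ, |w| ≤ 1 / 2 →
      c ≤ ‖∫ x in (0 : ℝ)..1, deriv γ (u + w * x)‖ := by
  have hd : Continuous (deriv γ) := hγ.continuous_deriv le_rfl
  have hcont : Continuous (fun p : ℝ × ℝ => ‖∫ x in (0 : ℝ)..1, deriv γ (p.1 + p.2 * x)‖) :=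
    (intervalIntegral.continuous_parametric_intervalIntegral_of_continuous' (by fun_prop) 0 1).norm
  obtain ⟨p, hpm, hmin⟩ := ((isCompact_Icc (a := (0 : ℝ)) (b := 1)).prod
    (isCompact_Icc (a := (-(1 : ℝ) / 2)) (b := 1 / 2))).exists_isMinOn
      ⟨(0, 0), by constructor <;> constructor <;> norm_num⟩ hcont.continuousOn
  refine ⟨‖∫ x in (0 : ℝ)..1, deriv γ (p.1 + p.2 * x)‖, ?_, fun u w hw => ?_⟩
  · rcases eq_or_ne p.2 0 with h0 | h0
    · simp [h0, harc p.1]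
    · have hne : γ (p.1 + p.2) - γ p.1 ≠ 0 := by
        intro h
        obtain ⟨k, hk⟩ := hinj _ _ (sub_eq_zero.1 h)
        have h1 : p.2 = -(k : ℝ) := by linarith
        have h2 := hpm.2
        rw [h1] at h2
        have h3 : (k : ℝ) < 1 := by linarith [h2.1]
        have h4 : (-1 : ℝ) < k := by linarith [h2.2]
        have h5 : k = 0 := by
          have h6 : k < 1 := by exact_mod_cast h3
          have h7 : -1 < k := by exact_mod_cast h4
          omega
        exact h0 (by simp [h1, h5])
      rw [chord_eq_smul_integral hγ] at hne
      exact norm_pos_iff.2 (right_ne_zero_of_smul hne)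
  · have hmem : (Int.fract u, w) ∈ Icc (0 : ℝ) 1 ×ˢ Icc (-(1 : ℝ) / 2) (1 / 2) :=
      ⟨⟨Int.fract_nonneg u, (Int.fract_lt_one u).le⟩,
        ⟨by linarith [(abs_le.1 hw).1], (abs_le.1 hw).2⟩⟩
    have h1 := hmin hmem
    have h2 : ∀ x, deriv γ (Int.fract u + w * x) = deriv γ (u + w * x) := by
      intro x
      rw [← (periodic_deriv hp).int_mul ⌊u⌋ (Int.fract u + w * x)]
      congr 1
      rw [Int.fract]
      ring
    simpa only [mem_ofPred_eq, h2] using h1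

lemma lintegral_comp_mul_left {x : ℝ} (hx : x ≠ 0) {F : ℝ → ℝ≥0∞} (hF : Measurable F) :
    ∫⁻ w, F (x * w) = ENNReal.ofReal |x⁻¹| * ∫⁻ w, F w := by
  rw [← lintegral_map hF (measurable_const_mul x), Real.map_volume_mul_left hx,
    lintegral_smul_measure, smul_eq_mul]

lemma lintegral_rescale_le {g : ℝ → Rn n} (hg : Continuous g) {α : ℝ} (hα : 1 ≤ α) (u : ℝ) {x : ℝ}
    (hx : x ∈ Ioc (0 : ℝ) 1) :
    ∫⁻ w in Ioo (-(1 : ℝ) / 2) (1 / 2), ENNReal.ofReal (‖g (u + w * x) - g u‖ ^ 2 / |w| ^ α)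
      ≤ ∫⁻ w in Ioo (-(1 : ℝ) / 2) (1 / 2), ENNReal.ofReal (‖g (u + w) - g u‖ ^ 2 / |w| ^ α) := by
  set S := Ioo (-(1 : ℝ) / 2) (1 / 2) with hS
  set F : ℝ → ℝ≥0∞ := S.indicator fun w => ENNReal.ofReal (‖g (u + w) - g u‖ ^ 2 / |w| ^ α)
    with hF
  have hFm : Measurable F := by
    refine Measurable.indicator (Measurable.ennreal_ofReal (Measurable.div ?_ ?_)) measurableSet_Ioo
    · exact (by fun_prop : Continuous fun w => ‖g (u + w) - g u‖ ^ 2).measurable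
    · exact continuous_abs.measurable.pow_const α
  calc ∫⁻ w in S, ENNReal.ofReal (‖g (u + w * x) - g u‖ ^ 2 / |w| ^ α)
      ≤ ∫⁻ w in S, ENNReal.ofReal (x ^ α) * F (x * w) := by
        refine setLIntegral_mono_ae (by fun_prop) (Eventually.of_forall fun w hw => ?_)
        have hmem : x * w ∈ S := by
          constructor <;> nlinarith [hx.1, hx.2, hw.1, hw.2]
        rw [hF, indicator_of_mem hmem, ← ENNReal.ofReal_mul (Real.rpow_nonneg hx.1.le _)]
        refine ENNReal.ofReal_le_ofReal (le_of_eq ?_)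
        rw [abs_mul, abs_of_pos hx.1, Real.mul_rpow hx.1.le (abs_nonneg _), mul_comm w x]
        have := (Real.rpow_pos_of_pos hx.1 α).ne'
        rw [← mul_div_assoc, mul_div_mul_left _ _ this]
    _ ≤ ∫⁻ w, ENNReal.ofReal (x ^ α) * F (x * w) := setLIntegral_le_lintegral _ _
    _ = ENNReal.ofReal (x ^ α) * (ENNReal.ofReal |x⁻¹| * ∫⁻ w, F w) := by
        rw [lintegral_const_mul _ (by fun_prop), lintegral_comp_mul_left hx.1.ne' hFm]
    _ ≤ 1 * ∫⁻ w, F w := by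
        rw [← mul_assoc, ← ENNReal.ofReal_mul (Real.rpow_nonneg hx.1.le _)]
        gcongr
        rw [ENNReal.ofReal_le_one, abs_of_pos (inv_pos.2 hx.1), ← div_eq_mul_inv,
          div_le_one hx.1]
        calc x ^ α ≤ x ^ (1 : ℝ) := Real.rpow_le_rpow_of_exponent_ge hx.1 hx.2 hα
          _ = x := Real.rpow_one x
    _ = _ := by rw [one_mul, hF, lintegral_indicator measurableSet_Ioo]

lemma integrable_oscillation {g : ℝ → Rn n} (hg : Continuous g) {α : ℝ} (hα : 1 ≤ α)
    (hG : gagliardoSq ((α - 1) / 2) g < ⊤) :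
    Integrable (fun p : ℝ × ℝ =>
      (∫ x in (0 : ℝ)..1, ‖g (p.1 + p.2 * x) - g p.1‖ ^ 2) / |p.2| ^ α) torusMeasure := by
  have hmI : Measurable fun p : ℝ × ℝ =>
      (∫ x in (0 : ℝ)..1, ‖g (p.1 + p.2 * x) - g p.1‖ ^ 2) / |p.2| ^ α := by
    refine Measurable.div (Continuous.measurable ?_) (continuous_snd.abs.measurable.pow_const α)
    exact intervalIntegral.continuous_parametric_intervalIntegral_of_continuous' (by fun_prop) 0 1
  refine ⟨hmI.aestronglyMeasurable, ?_⟩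
  rw [hasFiniteIntegral_iff_ofReal (Eventually.of_forall fun p => div_nonneg
    (intervalIntegral.integral_nonneg zero_le_one fun _ _ => by positivity)
    (Real.rpow_nonneg (abs_nonneg _) _))]
  refine lt_of_le_of_lt ?_ hG
  rw [torusMeasure, lintegral_prod _ hmI.ennreal_ofReal.aemeasurable, gagliardoSq]
  refine lintegral_mono fun u => ?_
  have e : 1 + 2 * ((α - 1) / 2) = α := by ring
  simp only [e]
  have hm : Measurable (Function.uncurry fun w x : ℝ =>
      ENNReal.ofReal (‖g (u + w * x) - g u‖ ^ 2 / |w| ^ α)) := by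
    refine Measurable.ennreal_ofReal (Measurable.div ?_ ?_)
    · exact (by fun_prop : Continuous fun q : ℝ × ℝ => ‖g (u + q.1 * q.2) - g u‖ ^ 2).measurable
    · exact continuous_fst.abs.measurable.pow_const α
  calc ∫⁻ w in Ioo (-(1 : ℝ) / 2) (1 / 2), ENNReal.ofReal
          ((∫ x in (0 : ℝ)..1, ‖g (u + w * x) - g u‖ ^ 2) / |w| ^ α)
      = ∫⁻ w in Ioo (-(1 : ℝ) / 2) (1 / 2), ∫⁻ x in Ioc (0 : ℝ) 1,
          ENNReal.ofReal (‖g (u + w * x) - g u‖ ^ 2 / |w| ^ α) := by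
        refine lintegral_congr fun w => ?_
        rw [← intervalIntegral.integral_div, intervalIntegral.integral_of_le zero_le_one,
          ofReal_integral_eq_lintegral_ofReal]
        · have hc : Continuous fun x => ‖g (u + w * x) - g u‖ ^ 2 / |w| ^ α := by fun_prop
          exact (hc.intervalIntegrable 0 1).1
        · exact Eventually.of_forall fun x => by positivity
    _ = ∫⁻ x in Ioc (0 : ℝ) 1, ∫⁻ w in Ioo (-(1 : ℝ) / 2) (1 / 2),
          ENNReal.ofReal (‖g (u + w * x) - g u‖ ^ 2 / |w| ^ α) := by
        exact lintegral_lintegral_swap hm.aemeasurable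
    _ ≤ ∫⁻ x in Ioc (0 : ℝ) 1, ∫⁻ w in Ioo (-(1 : ℝ) / 2) (1 / 2),
          ENNReal.ofReal (‖g (u + w) - g u‖ ^ 2 / |w| ^ α) :=
        setLIntegral_mono_ae (by fun_prop)
          (Eventually.of_forall fun x hx => lintegral_rescale_le hg hα u hx)
    _ = _ := by simp

/-- Uniform bounds for the curves `γ + t h`, `t ∈ T`. -/
structure AdmissibleVariation (c B : ℝ) (T : Set ℝ) (γ h : ℝ → Rn n) : Prop where
  contDiff : ContDiff ℝ 1 γ
  contDiff_dir : ContDiff ℝ 1 h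
  periodic : Function.Periodic γ 1
  periodic_dir : Function.Periodic h 1
  abs_param_le : ∀ t ∈ T, |t| ≤ 1
  norm_le : ∀ u, ‖deriv γ u‖ + ‖deriv h u‖ ≤ B
  le_speed : ∀ u, ∀ t ∈ T, c ≤ ‖deriv γ u + t • deriv h u‖
  le_chord : ∀ u w, |w| ≤ 1 / 2 → ∀ t ∈ T, c ≤ ‖(∫ x in (0 : ℝ)..1, deriv γ (u + w * x))
    + t • ∫ x in (0 : ℝ)..1, deriv h (u + w * x)‖
  abs_speed_sub_one_le : ∀ u, ∀ t ∈ T, |‖deriv γ u + t • deriv h u‖ - 1| ≤ 1 / 4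

lemma exists_admissibleVariation {γ h : ℝ → Rn n} (hγ : ContDiff ℝ 1 γ) (hh : ContDiff ℝ 1 h)
    (hγp : Function.Periodic γ 1) (hhp : Function.Periodic h 1) (hinj : PerInjective γ)
    (harc : ArcLengthParam γ) :
    ∃ c B δ : ℝ, 0 < c ∧ 0 < δ ∧ AdmissibleVariation c B (Metric.ball 0 δ) γ h := by
  obtain ⟨c, hc, hcγ⟩ := exists_le_norm_integral_deriv hγ hγp hinj harc
  obtain ⟨H, hH, hHh⟩ := exists_norm_le_of_periodic (hh.continuous_deriv le_rfl)
    (periodic_deriv hhp)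
  have hc1 : c ≤ 1 := by
    have := hcγ 0 0 (by norm_num)
    simpa [harc 0] using this
  have hHI : ∀ u w : ℝ, ‖∫ x in (0 : ℝ)..1, deriv h (u + w * x)‖ ≤ H := by
    intro u w
    simpa using intervalIntegral.norm_integral_le_of_norm_le_const (a := 0) (b := 1)
      (f := fun x => deriv h (u + w * x)) fun x _ => hHh _
  have hδ : ∀ t ∈ Metric.ball (0 : ℝ) (c / (4 * (H + 1))), |t| * (H + 1) ≤ c / 4 := by
    intro t ht
    rw [Metric.mem_ball, dist_zero_right, Real.norm_eq_abs, lt_div_iff₀ (by positivity)] at ht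
    linarith
  have hpert : ∀ t ∈ Metric.ball (0 : ℝ) (c / (4 * (H + 1))), ∀ v : Rn n, ‖v‖ ≤ H →
      ‖t • v‖ ≤ c / 4 := by
    intro t ht v hv
    rw [norm_smul, Real.norm_eq_abs]
    nlinarith [hδ t ht, abs_nonneg t, norm_nonneg v, mul_le_mul_of_nonneg_left hv (abs_nonneg t)]
  refine ⟨c / 2, 1 + H, c / (4 * (H + 1)), by positivity, by positivity, hγ, hh, hγp, hhp,
    fun t ht => ?_, fun u => ?_, fun u t ht => ?_, fun u w hw t ht => ?_, fun u t ht => ?_⟩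
  · nlinarith [hδ t ht, abs_nonneg t]
  · rw [harc u]
    linarith [hHh u]
  · have h1 := norm_sub_le_norm_add (deriv γ u) (t • deriv h u)
    rw [harc u] at h1
    linarith [hpert t ht _ (hHh u)]
  · have h1 := norm_sub_le_norm_add (∫ x in (0 : ℝ)..1, deriv γ (u + w * x))
      (t • ∫ x in (0 : ℝ)..1, deriv h (u + w * x))
    linarith [hpert t ht _ (hHI u w), hcγ u w hw]
  · have h1 := norm_sub_le_norm_add (deriv γ u) (t • deriv h u)
    have h2 := norm_add_le (deriv γ u) (t • deriv h u)
    rw [harc u] at h1 h2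
    have h3 := hpert t ht _ (hHh u)
    exact abs_le.2 ⟨by linarith, by linarith⟩

lemma deriv_add_smul {γ h : ℝ → Rn n} (hγ : ContDiff ℝ 1 γ) (hh : ContDiff ℝ 1 h) (t u : ℝ) :
    deriv (γ + t • h) u = deriv γ u + t • deriv h u := by
  have h1 := ((hγ.differentiable one_ne_zero) u).hasDerivAt
  have h2 := ((hh.differentiable one_ne_zero) u).hasDerivAt
  exact (h1.add (h2.const_smul t)).deriv

namespace AdmissibleVariation

variable {c B : ℝ} {T : Set ℝ} {γ h : ℝ → Rn n}

lemma contDiff_add (H : AdmissibleVariation c B T γ h) (t : ℝ) : ContDiff ℝ 1 (γ + t • h) :=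
  H.contDiff.add (contDiff_const.smul H.contDiff_dir)

lemma periodic_add (H : AdmissibleVariation c B T γ h) (t : ℝ) :
    Function.Periodic (γ + t • h) 1 := fun u => by
  simp [H.periodic u, H.periodic_dir u]

lemma continuous_deriv (H : AdmissibleVariation c B T γ h) : Continuous (deriv γ) :=
  H.contDiff.continuous_deriv le_rfl

lemma continuous_deriv_dir (H : AdmissibleVariation c B T γ h) : Continuous (deriv h) :=
  H.contDiff_dir.continuous_deriv le_rfl

lemma norm_chord (H : AdmissibleVariation c B T γ h) (u w t : ℝ) :
    ‖(γ + t • h) (u + w) - (γ + t • h) u‖ = |w| * ‖(∫ x in (0 : ℝ)..1, deriv γ (u + w * x))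
      + t • ∫ x in (0 : ℝ)..1, deriv h (u + w * x)‖ := by
  have h1 := H.continuous_deriv
  have h2 := H.continuous_deriv_dir
  rw [norm_chord_eq (H.contDiff_add t)]
  simp only [deriv_add_smul H.contDiff H.contDiff_dir]
  rw [intervalIntegral.integral_add, intervalIntegral.integral_smul]
  · exact (by fun_prop : Continuous fun x => deriv γ (u + w * x)).intervalIntegrable _ _
  · exact (by fun_prop : Continuous fun x => t • deriv h (u + w * x)).intervalIntegrable _ _

lemma arcLen_add (H : AdmissibleVariation c B T γ h) (u w t : ℝ) :
    arcLen (γ + t • h) u w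
      = |w| * ∫ x in (0 : ℝ)..1, ‖deriv γ (u + w * x) + t • deriv h (u + w * x)‖ := by
  rw [arcLen_eq]
  simp only [deriv_add_smul H.contDiff H.contDiff_dir]

lemma curveLen_add (H : AdmissibleVariation c B T γ h) (t : ℝ) :
    curveLen (γ + t • h) = ∫ x in (0 : ℝ)..1, ‖deriv γ x + t • deriv h x‖ := by
  simp only [curveLen, deriv_add_smul H.contDiff H.contDiff_dir]

lemma intervalIntegrable_speed (H : AdmissibleVariation c B T γ h) (u w t : ℝ) :
    IntervalIntegrable (fun x => ‖deriv γ (u + w * x) + t • deriv h (u + w * x)‖) volume 0 1 := by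
  have h1 := H.continuous_deriv
  have h2 := H.continuous_deriv_dir
  exact (by fun_prop : Continuous fun x =>
    ‖deriv γ (u + w * x) + t • deriv h (u + w * x)‖).intervalIntegrable _ _

lemma idist_eq_arcLen (H : AdmissibleVariation c B T γ h) {u w t : ℝ} (ht : t ∈ T)
    (hw : |w| ≤ 1 / 4) : idist (γ + t • h) u w = arcLen (γ + t • h) u w := by
  refine min_eq_left ?_
  have e1 : ∫ x in (0 : ℝ)..1, ‖deriv γ (u + w * x) + t • deriv h (u + w * x)‖ ≤ 5 / 4 := by
    have := intervalIntegral.integral_mono_on zero_le_one (H.intervalIntegrable_speed u w t)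
      (intervalIntegrable_const (c := (5 / 4 : ℝ)))
      fun x _ => by linarith [(abs_le.1 (H.abs_speed_sub_one_le (u + w * x) t ht)).2]
    simpa using this
  have e2 : 3 / 4 ≤ curveLen (γ + t • h) := by
    have h3 := H.intervalIntegrable_speed 0 1 t
    simp only [zero_add, one_mul] at h3
    have := intervalIntegral.integral_mono_on zero_le_one
      (intervalIntegrable_const (c := (3 / 4 : ℝ))) h3
      fun x _ => by linarith [(abs_le.1 (H.abs_speed_sub_one_le x t ht)).1]
    rw [H.curveLen_add]
    simpa using this
  rw [H.arcLen_add]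
  nlinarith [abs_nonneg w]

lemma chord_pos (H : AdmissibleVariation c B T γ h) (hc : 0 < c) {u w t : ℝ} (ht : t ∈ T)
    (hw : |w| ≤ 1 / 2) (h0 : w ≠ 0) : 0 < ‖(γ + t • h) (u + w) - (γ + t • h) u‖ := by
  rw [H.norm_chord]
  exact mul_pos (abs_pos.2 h0) (hc.trans_le (H.le_chord u w hw t ht))

lemma bddLipOn_speed (H : AdmissibleVariation c B T γ h) (u : ℝ) :
    BddLipOn B T (fun t => ‖deriv γ u + t • deriv h u‖) :=
  (BddLipOn.norm_affine H.abs_param_le _ _).mono (H.norm_le u)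

lemma bddLipOn_meanSpeed (H : AdmissibleVariation c B T γ h) (u w : ℝ) :
    BddLipOn B T
      (fun t => ∫ x in (0 : ℝ)..1, ‖deriv γ (u + w * x) + t • deriv h (u + w * x)‖) :=
  (BddLipOn.integral (fun x _ => H.bddLipOn_speed (u + w * x)) intervalIntegrable_const
    fun t _ => H.intervalIntegrable_speed u w t).mono (by simp)

lemma bddLipOn_chord (H : AdmissibleVariation c B T γ h) (u w : ℝ) :
    BddLipOn B T (fun t => ‖(∫ x in (0 : ℝ)..1, deriv γ (u + w * x))
      + t • ∫ x in (0 : ℝ)..1, deriv h (u + w * x)‖) := by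
  refine (BddLipOn.norm_affine H.abs_param_le _ _).mono ?_
  have h1 := H.continuous_deriv
  have h2 := H.continuous_deriv_dir
  have i1 : IntervalIntegrable (fun x => ‖deriv γ (u + w * x)‖) volume 0 1 :=
    (by fun_prop : Continuous fun x => ‖deriv γ (u + w * x)‖).intervalIntegrable _ _
  have i2 : IntervalIntegrable (fun x => ‖deriv h (u + w * x)‖) volume 0 1 :=
    (by fun_prop : Continuous fun x => ‖deriv h (u + w * x)‖).intervalIntegrable _ _
  have e1 := intervalIntegral.norm_integral_le_integral_norm (μ := volume)
    (f := fun x => deriv γ (u + w * x)) (zero_le_one (α := ℝ))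
  have e2 := intervalIntegral.norm_integral_le_integral_norm (μ := volume)
    (f := fun x => deriv h (u + w * x)) (zero_le_one (α := ℝ))
  have e3 := intervalIntegral.integral_mono_on zero_le_one (i1.add i2)
    (intervalIntegrable_const (c := B)) fun x _ => H.norm_le (u + w * x)
  rw [intervalIntegral.integral_add i1 i2] at e3
  simp only [intervalIntegral.integral_const, sub_zero, one_smul] at e3
  linarith

lemma exists_bddLipOn_near (hc : 0 < c) {α : ℝ} (hα : 0 < α) :
    ∃ K : ℝ, 0 ≤ K ∧ ∀ {T : Set ℝ} {γ h : ℝ → Rn n}, AdmissibleVariation c B T γ h →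
      ∀ u w : ℝ, |w| ≤ 1 / 4 → BddLipOn
        (K * ((∫ x in (0 : ℝ)..1, ‖deriv γ (u + w * x) - deriv γ u‖ ^ 2) / |w| ^ α
          + (∫ x in (0 : ℝ)..1, ‖deriv h (u + w * x) - deriv h u‖ ^ 2) / |w| ^ α)) T
        (fun t => ohIntegrand α (γ + t • h) u w) := by
  obtain ⟨K, hK, hK'⟩ := exists_bddLipOn_chord_arc (Rn n) (B := B) hc hα
  refine ⟨K, hK, fun {T γ h} H u w hw => ?_⟩
  have h1 := H.continuous_deriv
  have h2 := H.continuous_deriv_dir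
  have key := hK' T (fun x => deriv γ (u + w * x)) (fun x => deriv h (u + w * x))
    (deriv γ u) (deriv h u) (deriv γ (u + w)) (deriv h (u + w)) H.abs_param_le (by fun_prop)
    (by fun_prop) (fun x => H.norm_le _) (H.norm_le _) (H.norm_le _) (fun x => H.le_speed _)
    (H.le_speed _) (H.le_chord u w (by linarith))
  refine ((key.const_mul (|w| ^ (-α))).mono (le_of_eq ?_)).congr fun t ht => ?_
  · rw [abs_of_nonneg (Real.rpow_nonneg (abs_nonneg _) _), Real.rpow_neg (abs_nonneg _),
      intervalIntegral.integral_add]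
    · ring
    · exact (by fun_prop : Continuous fun x =>
        ‖deriv γ (u + w * x) - deriv γ u‖ ^ 2).intervalIntegrable _ _
    · exact (by fun_prop : Continuous fun x =>
        ‖deriv h (u + w * x) - deriv h u‖ ^ 2).intervalIntegrable _ _
  · have hr : 0 ≤ ∫ x in (0 : ℝ)..1, ‖deriv γ (u + w * x) + t • deriv h (u + w * x)‖ :=
      intervalIntegral.integral_nonneg zero_le_one fun _ _ => norm_nonneg _
    rw [ohIntegrand, H.idist_eq_arcLen ht hw, H.norm_chord, H.arcLen_add,
      deriv_add_smul H.contDiff H.contDiff_dir, deriv_add_smul H.contDiff H.contDiff_dir,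
      one_div, one_div, ← Real.rpow_neg (by positivity), ← Real.rpow_neg (by positivity),
      Real.mul_rpow (by positivity) (by positivity), Real.mul_rpow (by positivity) hr]
    ring

lemma exists_bddLipOn_far (hc : 0 < c) {α : ℝ} (hα : 0 < α) :
    ∃ K : ℝ, ∀ {T : Set ℝ} {γ h : ℝ → Rn n}, AdmissibleVariation c B T γ h →
      ∀ u w : ℝ, 1 / 4 ≤ |w| → |w| ≤ 1 / 2 →
        BddLipOn K T (fun t => ohIntegrand α (γ + t • h) u w) := by
  refine ⟨2 * (2 * (((c / 4) ^ (-α) + α * (c / 4) ^ (-α - 1) * B)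
    + ((c / 4) ^ (-α) + α * (c / 4) ^ (-α - 1) * (B + B))) * B) * B,
    fun {T γ h} H u w hw hw2 => ?_⟩
  have hB : 0 ≤ B := le_trans (by positivity) (H.norm_le 0)
  have hwB : |(|w|)| * B ≤ B := by rw [abs_abs]; nlinarith
  have hs : BddLipOn B T (fun t => ‖(γ + t • h) (u + w) - (γ + t • h) u‖) :=
    (((H.bddLipOn_chord u w).const_mul |w|).mono hwB).congr fun t _ => H.norm_chord u w t
  have hr : BddLipOn B T (fun t => arcLen (γ + t • h) u w) :=
    (((H.bddLipOn_meanSpeed u w).const_mul |w|).mono hwB).congr fun t _ => H.arcLen_add u w t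
  have hL : BddLipOn B T (fun t => curveLen (γ + t • h)) :=
    (H.bddLipOn_meanSpeed 0 1).congr fun t _ => by
      simp only [H.curveLen_add t, zero_add, one_mul]
  have hd : BddLipOn (B + B) T (fun t => idist (γ + t • h) u w) :=
    (hr.mono (by linarith)).min (hL.sub hr)
  have hcs : ∀ t ∈ T, c / 4 ≤ ‖(γ + t • h) (u + w) - (γ + t • h) u‖ := by
    intro t ht
    rw [H.norm_chord]
    nlinarith [H.le_chord u w hw2 t ht]
  have hcd : ∀ t ∈ T, c / 4 ≤ idist (γ + t • h) u w := fun t ht =>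
    (hcs t ht).trans (norm_chord_le_idist (H.contDiff_add t) (H.periodic_add t) (by linarith))
  have hc4 : 0 < c / 4 := by positivity
  refine (((((hs.rpow_neg hc4 hα.le hcs).sub (hd.rpow_neg hc4 hα.le hcd)).mul
    (H.bddLipOn_speed (u + w))).mul (H.bddLipOn_speed u)).mono (le_of_eq ?_)).congr
      fun t ht => ?_
  · ring
  · rw [ohIntegrand, deriv_add_smul H.contDiff H.contDiff_dir,
      deriv_add_smul H.contDiff H.contDiff_dir, one_div, one_div,
      Real.rpow_neg (norm_nonneg _), Real.rpow_neg (hc4.le.trans (hcd t ht))]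

end AdmissibleVariation

section Derivative

variable {c B : ℝ} {T : Set ℝ} {γ h : ℝ → Rn n}

lemma hasDerivAt_norm_affine {E : Type*} [NormedAddCommGroup E] [InnerProductSpace ℝ E] {a : E}
    (ha : a ≠ 0) (b : E) : HasDerivAt (fun t : ℝ => ‖a + t • b‖) (⟪a, b⟫ / ‖a‖) (0 : ℝ) := by
  have h1 : HasDerivAt (fun t : ℝ => a + t • b) b 0 := by
    simpa using ((hasDerivAt_id (0 : ℝ)).smul_const b).const_add a
  have h2 := h1.norm_sq.sqrt (by simpa using ha)
  simp only [zero_smul, add_zero, Real.sqrt_sq (norm_nonneg _)] at h2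
  convert h2 using 1
  field_simp

namespace AdmissibleVariation

lemma hasDerivAt_meanSpeed (H : AdmissibleVariation c B T γ h) (harc : ArcLengthParam γ)
    (u w : ℝ) :
    HasDerivAt (fun t : ℝ => ∫ x in (0 : ℝ)..1, ‖deriv γ (u + w * x) + t • deriv h (u + w * x)‖)
      (∫ x in (0 : ℝ)..1, ⟪deriv γ (u + w * x), deriv h (u + w * x)⟫) (0 : ℝ) := by
  have h1 := H.continuous_deriv
  have h2 := H.continuous_deriv_dir
  refine (intervalIntegral.hasDerivAt_integral_of_dominated_loc_of_lip (𝕜 := ℝ)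
    (bound := fun x => ‖deriv h (u + w * x)‖) univ_mem
    (Eventually.of_forall fun t => (by fun_prop : Continuous fun x =>
      ‖deriv γ (u + w * x) + t • deriv h (u + w * x)‖).aestronglyMeasurable)
    (H.intervalIntegrable_speed u w 0) ?_ ?_ ?_ ?_).2
  · exact (by fun_prop : Continuous fun x =>
      (⟪deriv γ (u + w * x), deriv h (u + w * x)⟫ : ℝ)).aestronglyMeasurable
  · refine Eventually.of_forall fun x _ => LipschitzOnWith.of_dist_le_mul fun t _ s _ => ?_
    rw [Real.dist_eq, Real.dist_eq, Real.coe_nnabs, abs_norm]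
    refine (abs_norm_sub_norm_le _ _).trans_eq ?_
    rw [add_sub_add_left_eq_sub, ← sub_smul, norm_smul, Real.norm_eq_abs, mul_comm]
  · exact (by fun_prop : Continuous fun x => ‖deriv h (u + w * x)‖).intervalIntegrable _ _
  · refine Eventually.of_forall fun x _ => ?_
    have h3 := hasDerivAt_norm_affine (a := deriv γ (u + w * x))
      (norm_ne_zero_iff.1 (by rw [harc]; exact one_ne_zero)) (deriv h (u + w * x))
    rwa [harc, div_one] at h3

end AdmissibleVariation

/-- The derivative of the integrand of the O'Hara energy at an arc-length curve `γ` in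
direction `h`. -/
def ohVariation (α : ℝ) (γ h : ℝ → Rn n) (u w : ℝ) : ℝ :=
  α * (∫ x in (0 : ℝ)..1, ⟪deriv γ (u + w * x), deriv h (u + w * x)⟫) / |w| ^ α
    - α * ⟪γ (u + w) - γ u, h (u + w) - h u⟫ / ‖γ (u + w) - γ u‖ ^ (α + 2)
    + (1 / ‖γ (u + w) - γ u‖ ^ α - 1 / |w| ^ α)
      * (⟪deriv γ (u + w), deriv h (u + w)⟫ + ⟪deriv γ u, deriv h u⟫)

lemma AdmissibleVariation.hasDerivAt_ohIntegrand (H : AdmissibleVariation c B T γ h)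
    (harc : ArcLengthParam γ) {α u w : ℝ} (hw : |w| < 1 / 2) (h0 : w ≠ 0)
    (hne : γ (u + w) ≠ γ u) :
    HasDerivAt (fun t : ℝ => ohIntegrand α (γ + t • h) u w) (ohVariation α γ h u w) 0 := by
  have hw0 : 0 < |w| := abs_pos.2 h0
  have hpos : 0 < ‖γ (u + w) - γ u‖ := norm_pos_iff.2 (sub_ne_zero.2 hne)
  have hsp : ∀ v, HasDerivAt (fun t : ℝ => ‖deriv γ v + t • deriv h v‖)
      ⟪deriv γ v, deriv h v⟫ (0 : ℝ) := by
    intro v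
    have h3 := hasDerivAt_norm_affine (a := deriv γ v)
      (norm_ne_zero_iff.1 (by rw [harc]; exact one_ne_zero)) (deriv h v)
    rwa [harc, div_one] at h3
  have hch : HasDerivAt (fun t : ℝ => ‖(γ + t • h) (u + w) - (γ + t • h) u‖)
      (⟪γ (u + w) - γ u, h (u + w) - h u⟫ / ‖γ (u + w) - γ u‖) 0 := by
    have he : (fun t : ℝ => ‖(γ + t • h) (u + w) - (γ + t • h) u‖)
        = fun t => ‖γ (u + w) - γ u + t • (h (u + w) - h u)‖ := by
      funext t
      congr 1
      simp only [Pi.add_apply, Pi.smul_apply]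
      module
    rw [he]
    exact hasDerivAt_norm_affine (norm_pos_iff.1 hpos) (h (u + w) - h u)
  have harcD : HasDerivAt (fun t : ℝ => arcLen (γ + t • h) u w)
      (|w| * ∫ x in (0 : ℝ)..1, ⟪deriv γ (u + w * x), deriv h (u + w * x)⟫) 0 := by
    simp only [H.arcLen_add]
    exact (H.hasDerivAt_meanSpeed harc u w).const_mul _
  have hlenD : ContinuousAt (fun t : ℝ => curveLen (γ + t • h)) 0 := by
    have := (H.hasDerivAt_meanSpeed harc 0 1).continuousAt
    simpa only [H.curveLen_add, zero_add, one_mul] using this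
  have harc0 : arcLen γ u w = |w| := by
    rw [arcLen_eq]
    simp [harc _]
  have hlen0 : curveLen γ = 1 := by simp [curveLen, harc _]
  have hev : ∀ᶠ t in 𝓝 (0 : ℝ), idist (γ + t • h) u w = arcLen (γ + t • h) u w := by
    have hlt : arcLen (γ + (0 : ℝ) • h) u w
        < curveLen (γ + (0 : ℝ) • h) - arcLen (γ + (0 : ℝ) • h) u w := by
      rw [zero_smul, add_zero, harc0, hlen0]
      linarith
    filter_upwards [harcD.continuousAt.eventually_lt (hlenD.sub harcD.continuousAt) hlt] with t ht
    exact min_eq_left ht.le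
  have hid : HasDerivAt (fun t : ℝ => idist (γ + t • h) u w)
      (|w| * ∫ x in (0 : ℝ)..1, ⟪deriv γ (u + w * x), deriv h (u + w * x)⟫) 0 :=
    harcD.congr_of_eventuallyEq hev
  have hid0 : idist (γ + (0 : ℝ) • h) u w = |w| := by
    rw [hev.self_of_nhds, zero_smul, add_zero, harc0]
  have hch0 : ‖(γ + (0 : ℝ) • h) (u + w) - (γ + (0 : ℝ) • h) u‖ = ‖γ (u + w) - γ u‖ := by simp
  have hpow1 := hch.rpow_const (p := α) (Or.inl (by rw [hch0]; exact hpos.ne'))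
  have hpow2 := hid.rpow_const (p := α) (Or.inl (by rw [hid0]; exact hw0.ne'))
  have hp1 := (Real.rpow_pos_of_pos hpos α).ne'
  have hp2 := (Real.rpow_pos_of_pos hw0 α).ne'
  have hinv1 := hpow1.inv (by rw [hch0]; exact hp1)
  have hinv2 := hpow2.inv (by rw [hid0]; exact hp2)
  have hall := ((hinv1.sub hinv2).mul (hsp (u + w))).mul (hsp u)
  have hfun : (fun t : ℝ => ohIntegrand α (γ + t • h) u w) = fun t : ℝ =>
      ((‖(γ + t • h) (u + w) - (γ + t • h) u‖ ^ α)⁻¹ - (idist (γ + t • h) u w ^ α)⁻¹)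
        * ‖deriv γ (u + w) + t • deriv h (u + w)‖ * ‖deriv γ u + t • deriv h u‖ := by
    funext t
    rw [ohIntegrand, deriv_add_smul H.contDiff H.contDiff_dir,
      deriv_add_smul H.contDiff H.contDiff_dir, one_div, one_div]
  rw [hfun]
  refine HasDerivAt.congr_deriv (f := _) hall ?_
  rw [hid0, hch0]
  simp only [Pi.sub_apply, Pi.mul_apply, Pi.inv_apply, hid0, hch0]
  simp only [zero_smul, add_zero, harc _]
  rw [ohVariation, Real.rpow_sub_one hpos.ne', Real.rpow_sub_one hw0.ne', Real.rpow_add hpos,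
    Real.rpow_two]
  field_simp
  ring

lemma measurable_ohVariation (hγ : ContDiff ℝ 1 γ) (hh : ContDiff ℝ 1 h) (α : ℝ) :
    Measurable (fun p : ℝ × ℝ => ohVariation α γ h p.1 p.2) := by
  have h1 : Continuous (deriv γ) := hγ.continuous_deriv le_rfl
  have h2 : Continuous (deriv h) := hh.continuous_deriv le_rfl
  have h3 := hγ.continuous
  have h4 := hh.continuous
  have e1 : Measurable fun p : ℝ × ℝ =>
      ∫ x in (0 : ℝ)..1, (⟪deriv γ (p.1 + p.2 * x), deriv h (p.1 + p.2 * x)⟫ : ℝ) :=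
    (intervalIntegral.continuous_parametric_intervalIntegral_of_continuous'
      (by fun_prop) 0 1).measurable
  have e2 : ∀ β : ℝ, Measurable fun p : ℝ × ℝ => |p.2| ^ β := fun β =>
    continuous_snd.abs.measurable.pow_const β
  have e3 : ∀ β : ℝ, Measurable fun p : ℝ × ℝ => ‖γ (p.1 + p.2) - γ p.1‖ ^ β := fun β =>
    (by fun_prop : Continuous fun p : ℝ × ℝ => ‖γ (p.1 + p.2) - γ p.1‖).measurable.pow_const β
  have e4 : Measurable fun p : ℝ × ℝ =>
      (⟪γ (p.1 + p.2) - γ p.1, h (p.1 + p.2) - h p.1⟫ : ℝ) :=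
    (by fun_prop : Continuous _).measurable
  have e5 : Measurable fun p : ℝ × ℝ =>
      (⟪deriv γ (p.1 + p.2), deriv h (p.1 + p.2)⟫ + ⟪deriv γ p.1, deriv h p.1⟫ : ℝ) :=
    (by fun_prop : Continuous _).measurable
  unfold ohVariation
  exact (((e1.const_mul α).div (e2 α)).sub ((e4.const_mul α).div (e3 (α + 2)))).add
    ((((e3 α).const_div 1).sub ((e2 α).const_div 1)).mul e5)

theorem hasDerivAt_oharaER {α : ℝ} (hα : 1 ≤ α) (hγ : MemH1 ((α - 1) / 2) γ)
    (hinj : PerInjective γ) (harc : ArcLengthParam γ) (hh : MemH1 ((α - 1) / 2) h) :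
    Integrable (fun p : ℝ × ℝ => ohVariation α γ h p.1 p.2) torusMeasure ∧
      HasDerivAt (fun t : ℝ => oharaER α (γ + t • h))
        (∫ p, ohVariation α γ h p.1 p.2 ∂torusMeasure) 0 := by
  obtain ⟨c, B, δ, hc, hδ, H⟩ := exists_admissibleVariation hγ.2.1 hh.2.1 hγ.1 hh.1 hinj harc
  have hα0 : 0 < α := by linarith
  obtain ⟨K, hK, hnear⟩ := AdmissibleVariation.exists_bddLipOn_near (n := n) (B := B) hc hα0
  obtain ⟨K', hfar⟩ := AdmissibleVariation.exists_bddLipOn_far (n := n) (B := B) hc hα0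
  set bound : ℝ × ℝ → ℝ := fun p =>
    K * ((∫ x in (0 : ℝ)..1, ‖deriv γ (p.1 + p.2 * x) - deriv γ p.1‖ ^ 2) / |p.2| ^ α
      + (∫ x in (0 : ℝ)..1, ‖deriv h (p.1 + p.2 * x) - deriv h p.1‖ ^ 2) / |p.2| ^ α) + |K'|
    with hbound
  have hbi : Integrable bound torusMeasure :=
    (((integrable_oscillation H.continuous_deriv hα hγ.2.2).add
      (integrable_oscillation H.continuous_deriv_dir hα hh.2.2)).const_mul K).add
        (integrable_const _)
  have h0T : (0 : ℝ) ∈ Metric.ball (0 : ℝ) δ := Metric.mem_ball_self hδ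
  have hBL : ∀ᵐ p ∂torusMeasure,
      BddLipOn (bound p) (Metric.ball 0 δ) (fun t => ohIntegrand α (γ + t • h) p.1 p.2) := by
    filter_upwards [ae_torusMeasure] with p hp
    rcases le_total |p.2| (1 / 4) with h4 | h4
    · exact (hnear H p.1 p.2 h4).mono (le_add_of_nonneg_right (abs_nonneg _))
    · refine (hfar H p.1 p.2 h4 hp.2.le).mono ?_
      refine (le_abs_self K').trans (le_add_of_nonneg_left ?_)
      refine mul_nonneg hK (add_nonneg ?_ ?_) <;>
        exact div_nonneg (intervalIntegral.integral_nonneg zero_le_one fun _ _ => by positivity)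
          (by positivity)
  have hcd := H.contDiff_add
  have key := hasDerivAt_integral_of_dominated_loc_of_lip (μ := torusMeasure) (𝕜 := ℝ)
    (F := fun t p => ohIntegrand α (γ + t • h) p.1 p.2) (x₀ := 0) (bound := bound)
    (F' := fun p => ohVariation α γ h p.1 p.2) (Metric.ball_mem_nhds 0 hδ)
    (Eventually.of_forall fun t => (measurable_ohIntegrand (hcd t) α).aestronglyMeasurable)
    ?_ (measurable_ohVariation hγ.2.1 hh.2.1 α).aestronglyMeasurable ?_ hbi ?_
  · refine ⟨key.1, key.2.congr_of_eventuallyEq ?_⟩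
    filter_upwards [Metric.ball_mem_nhds (0 : ℝ) hδ] with t ht
    refine oharaER_eq_integral (hcd t) (H.periodic_add t) hα0 fun u w hw h0 he => ?_
    have := H.chord_pos hc ht hw h0 (u := u)
    rw [he, sub_self, norm_zero] at this
    exact lt_irrefl _ this
  · refine hbi.mono' (measurable_ohIntegrand (hcd 0) α).aestronglyMeasurable ?_
    filter_upwards [hBL] with p hp
    exact hp.1 0 h0T
  · filter_upwards [hBL] with p hp
    refine LipschitzOnWith.of_dist_le_mul fun t ht s hs => ?_
    rw [Real.dist_eq, Real.dist_eq, Real.coe_nnabs]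
    exact (hp.2 t ht s hs).trans (mul_le_mul_of_nonneg_right (le_abs_self _) (abs_nonneg _))
  · filter_upwards [ae_torusMeasure] with p hp
    refine H.hasDerivAt_ohIntegrand harc hp.2 hp.1 fun he => ?_
    have := H.chord_pos hc h0T hp.2.le hp.1 (u := p.1)
    simp [he] at this

end Derivative

section PrincipalValue

variable {γ h : ℝ → Rn n} {α : ℝ}

/-- The integrand of the principal value formula for the first variation of `E^α`. -/
def pvIntegrand (α : ℝ) (γ h : ℝ → Rn n) (u w : ℝ) : ℝ :=
  (α - 2) * ⟪deriv γ u, deriv h u⟫ / |w| ^ α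
    + 2 * ⟪deriv γ u, deriv h u⟫ / ‖γ (u + w) - γ u‖ ^ α
    - α * ⟪γ (u + w) - γ u, h (u + w) - h u⟫ / ‖γ (u + w) - γ u‖ ^ (α + 2)

lemma ohVariation_sub_pvIntegrand (α : ℝ) (γ h : ℝ → Rn n) (u w : ℝ) :
    ohVariation α γ h u w - pvIntegrand α γ h u w
      = α / |w| ^ α * (∫ x in (0 : ℝ)..1, ⟪deriv γ (u + w * x), deriv h (u + w * x)⟫)
        - (α - 1) / |w| ^ α * ⟪deriv γ u, deriv h u⟫
        - 1 / |w| ^ α * ⟪deriv γ (u + w), deriv h (u + w)⟫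
        + ⟪deriv γ (u + w), deriv h (u + w)⟫ / ‖γ (u + w) - γ u‖ ^ α
        - ⟪deriv γ u, deriv h u⟫ / ‖γ (u + w) - γ u‖ ^ α := by
  unfold ohVariation pvIntegrand
  ring

lemma intervalIntegral_comp_add_of_periodic {f : ℝ → ℝ} (hf : Function.Periodic f 1) (d : ℝ) :
    ∫ u in (0 : ℝ)..1, f (u + d) = ∫ u in (0 : ℝ)..1, f u := by
  rw [intervalIntegral.integral_comp_add_right, add_comm 1 d, zero_add]
  simpa using hf.intervalIntegral_add_eq d 0

lemma integral_ohVariation_sub_pvIntegrand (hγ : ContDiff ℝ 1 γ) (hh : ContDiff ℝ 1 h)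
    (hγp : Function.Periodic γ 1) (hhp : Function.Periodic h 1) {w : ℝ}
    (hne : ∀ u, γ (u + w) ≠ γ u) :
    ∫ u in (0 : ℝ)..1, (ohVariation α γ h u w - pvIntegrand α γ h u w)
      = (∫ u in (0 : ℝ)..1, ⟪deriv γ u, deriv h u⟫ / ‖γ (u + -w) - γ u‖ ^ α)
        - ∫ u in (0 : ℝ)..1, ⟪deriv γ u, deriv h u⟫ / ‖γ (u + w) - γ u‖ ^ α := by
  have h1 : Continuous (deriv γ) := hγ.continuous_deriv le_rfl
  have h2 : Continuous (deriv h) := hh.continuous_deriv le_rfl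
  have h3 := hγ.continuous
  set φ : ℝ → ℝ := fun u => ⟪deriv γ u, deriv h u⟫ with hφ
  have hφc : Continuous φ := by fun_prop
  have hφp : Function.Periodic φ 1 := fun u => by
    simp only [hφ, periodic_deriv hγp u, periodic_deriv hhp u]
  have hpos : ∀ u, ‖γ (u + w) - γ u‖ ≠ 0 := fun u => norm_ne_zero_iff.2 (sub_ne_zero.2 (hne u))
  have hA : Continuous fun u => ‖γ (u + w) - γ u‖ ^ α :=
    (by fun_prop : Continuous fun u => ‖γ (u + w) - γ u‖).rpow_const fun u => Or.inl (hpos u)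
  have hA0 : ∀ u, ‖γ (u + w) - γ u‖ ^ α ≠ 0 := fun u =>
    (Real.rpow_pos_of_pos ((norm_nonneg _).lt_of_ne' (hpos u)) α).ne'
  have hIc : Continuous fun u => ∫ x in (0 : ℝ)..1, φ (u + w * x) :=
    intervalIntegral.continuous_parametric_intervalIntegral_of_continuous' (by fun_prop) 0 1
  have hI : ∫ u in (0 : ℝ)..1, ∫ x in (0 : ℝ)..1, φ (u + w * x) = ∫ u in (0 : ℝ)..1, φ u := by
    rw [intervalIntegral_intervalIntegral_swap]
    · simp only [intervalIntegral_comp_add_of_periodic hφp]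
      simp
    · have hc : Continuous fun p : ℝ × ℝ => φ (p.1 + w * p.2) := by fun_prop
      exact (hc.continuousOn.integrableOn_compact (isCompact_uIcc.prod isCompact_uIcc)).mono_set
        (prod_mono uIoc_subset_uIcc uIoc_subset_uIcc)
  have hshift : ∫ u in (0 : ℝ)..1, φ (u + w) / ‖γ (u + w) - γ u‖ ^ α
      = ∫ u in (0 : ℝ)..1, φ u / ‖γ (u + -w) - γ u‖ ^ α := by
    rw [← intervalIntegral_comp_add_of_periodic (d := w)
      (f := fun u => φ u / ‖γ (u + -w) - γ u‖ ^ α)]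
    · simp only [add_neg_cancel_right, norm_sub_rev]
    · intro u
      simp only [hφp u, hγp u, add_right_comm u 1, hγp (u + -w)]
  have e : ∀ u, ohVariation α γ h u w - pvIntegrand α γ h u w
      = α / |w| ^ α * (∫ x in (0 : ℝ)..1, φ (u + w * x))
        - (α - 1) / |w| ^ α * φ u - 1 / |w| ^ α * φ (u + w)
        + φ (u + w) / ‖γ (u + w) - γ u‖ ^ α - φ u / ‖γ (u + w) - γ u‖ ^ α :=
    fun u => ohVariation_sub_pvIntegrand α γ h u w
  have i1 := (hIc.const_mul (α / |w| ^ α)).intervalIntegrable (μ := volume) 0 1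
  have i2 := (hφc.const_mul ((α - 1) / |w| ^ α)).intervalIntegrable (μ := volume) 0 1
  have i3 := ((by fun_prop : Continuous fun u => φ (u + w)).const_mul
    (1 / |w| ^ α)).intervalIntegrable (μ := volume) 0 1
  have i4 : IntervalIntegrable (fun u => φ (u + w) / ‖γ (u + w) - γ u‖ ^ α) volume 0 1 :=
    ((by fun_prop : Continuous fun u => φ (u + w)).div hA hA0).intervalIntegrable 0 1
  have i5 : IntervalIntegrable (fun u => φ u / ‖γ (u + w) - γ u‖ ^ α) volume 0 1 :=
    (hφc.div hA hA0).intervalIntegrable 0 1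
  simp only [e]
  rw [intervalIntegral.integral_sub (((i1.sub i2).sub i3).add i4) i5,
    intervalIntegral.integral_add ((i1.sub i2).sub i3) i4,
    intervalIntegral.integral_sub (i1.sub i2) i3, intervalIntegral.integral_sub i1 i2,
    intervalIntegral.integral_const_mul, intervalIntegral.integral_const_mul,
    intervalIntegral.integral_const_mul, hI, intervalIntegral_comp_add_of_periodic hφp, hshift]
  ring

lemma mem_Wset_iff {ε w : ℝ} (hε : 0 < ε) : w ∈ Wset ε ↔ ε ≤ |w| ∧ |w| ≤ 1 / 2 := by
  simp only [Wset, mem_union, mem_Icc, abs_le, le_abs']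
  constructor
  · rintro (⟨h1, h2⟩ | ⟨h1, h2⟩)
    · exact ⟨Or.inl h2, by linarith, by linarith⟩
    · exact ⟨Or.inr h1, by linarith, h2⟩
  · rintro ⟨h1 | h1, h2, h3⟩
    · exact Or.inl ⟨by linarith, h1⟩
    · exact Or.inr ⟨h1, h3⟩

lemma isCompact_Wset (ε : ℝ) : IsCompact (Wset ε) := isCompact_Icc.union isCompact_Icc

lemma torusMeasure_restrict {ε : ℝ} (hε : 0 < ε) :
    torusMeasure.restrict {p : ℝ × ℝ | ε ≤ |p.2|}
      = (volume.restrict (Ioc (0 : ℝ) 1)).prod (volume.restrict (Wset ε)) := by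
  have hm : MeasurableSet {w : ℝ | ε ≤ |w|} :=
    (isClosed_le continuous_const continuous_abs).measurableSet
  have hs : Wset ε = {w : ℝ | ε ≤ |w|} ∩ Icc (-(1 : ℝ) / 2) (1 / 2) := by
    ext w
    rw [mem_Wset_iff hε, mem_inter_iff, mem_ofPred_eq, mem_Icc, abs_le, neg_div]
  have hset : {p : ℝ × ℝ | ε ≤ |p.2|} = univ ×ˢ {w : ℝ | ε ≤ |w|} := by
    ext p
    simp
  rw [hset, torusMeasure, ← Measure.prod_restrict, Measure.restrict_univ,
    Measure.restrict_restrict hm, hs,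
    Measure.restrict_congr_set ((ae_eq_refl _).inter (Ioo_ae_eq_Icc (μ := volume)))]

lemma integral_Wset_eq_zero_of_odd {ε : ℝ} (hε : 0 < ε) {g : ℝ → ℝ} (hg : ∀ w, g (-w) = -g w) :
    ∫ w in Wset ε, g w = 0 := by
  have hm := (isCompact_Wset ε).measurableSet
  have hodd : ∀ w, (Wset ε).indicator g (-w) = -(Wset ε).indicator g w := fun w => by
    have : -w ∈ Wset ε ↔ w ∈ Wset ε := by simp only [mem_Wset_iff hε, abs_neg]
    by_cases hw : w ∈ Wset ε
    · rw [indicator_of_mem hw, indicator_of_mem (this.2 hw), hg]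
    · rw [indicator_of_notMem hw, indicator_of_notMem (mt this.1 hw), neg_zero]
  rw [← integral_indicator hm]
  have h1 := integral_neg_eq_self ((Wset ε).indicator g) volume
  simp only [hodd, integral_neg] at h1
  linarith

lemma integrable_pvIntegrand (hγ : ContDiff ℝ 1 γ) (hh : ContDiff ℝ 1 h)
    (hne : ∀ u w : ℝ, |w| ≤ 1 / 2 → w ≠ 0 → γ (u + w) ≠ γ u) {ε : ℝ} (hε : 0 < ε) :
    Integrable (fun p : ℝ × ℝ => pvIntegrand α γ h p.1 p.2)
      ((volume.restrict (Ioc (0 : ℝ) 1)).prod (volume.restrict (Wset ε))) := by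
  have h1 : Continuous (deriv γ) := hγ.continuous_deriv le_rfl
  have h2 : Continuous (deriv h) := hh.continuous_deriv le_rfl
  have h3 := hγ.continuous
  have h4 := hh.continuous
  have hw : ∀ p ∈ Icc (0 : ℝ) 1 ×ˢ Wset ε, |p.2| ≠ 0 := fun p hp =>
    (hε.trans_le ((mem_Wset_iff hε).1 hp.2).1).ne'
  have hd : ∀ p ∈ Icc (0 : ℝ) 1 ×ˢ Wset ε, ‖γ (p.1 + p.2) - γ p.1‖ ≠ 0 := fun p hp =>
    norm_ne_zero_iff.2 (sub_ne_zero.2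
      (hne _ _ ((mem_Wset_iff hε).1 hp.2).2 (abs_ne_zero.1 (hw p hp))))
  have hpow : ∀ {f : ℝ × ℝ → ℝ}, Continuous f → (∀ p, 0 ≤ f p) →
      (∀ p ∈ Icc (0 : ℝ) 1 ×ˢ Wset ε, f p ≠ 0) → ∀ β : ℝ,
      ContinuousOn (fun p => f p ^ β) (Icc (0 : ℝ) 1 ×ˢ Wset ε) ∧
        ∀ p ∈ Icc (0 : ℝ) 1 ×ˢ Wset ε, f p ^ β ≠ 0 := fun hf hf0 hne β =>
    ⟨hf.continuousOn.rpow_const fun p hp => Or.inl (hne p hp), fun p hp =>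
      (Real.rpow_pos_of_pos ((hf0 p).lt_of_ne' (hne p hp)) β).ne'⟩
  have p1 := hpow (f := fun p => |p.2|) (by fun_prop) (fun p => abs_nonneg _) hw α
  have p2 := hpow (f := fun p => ‖γ (p.1 + p.2) - γ p.1‖) (by fun_prop)
    (fun p => norm_nonneg _) hd
  have hc : ContinuousOn (fun p : ℝ × ℝ => pvIntegrand α γ h p.1 p.2)
      (Icc (0 : ℝ) 1 ×ˢ Wset ε) := by
    unfold pvIntegrand
    refine ((ContinuousOn.div ?_ p1.1 p1.2).add (ContinuousOn.div ?_ (p2 α).1 (p2 α).2)).sub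
      (ContinuousOn.div ?_ (p2 (α + 2)).1 (p2 (α + 2)).2) <;>
      exact (by fun_prop : Continuous _).continuousOn
  rw [Measure.prod_restrict]
  exact (hc.integrableOn_compact (isCompact_Icc.prod (isCompact_Wset ε))).mono_set
    (prod_mono Ioc_subset_Icc_self Subset.rfl)

lemma integral_pvIntegrand (hγ : ContDiff ℝ 1 γ) (hh : ContDiff ℝ 1 h)
    (hγp : Function.Periodic γ 1) (hhp : Function.Periodic h 1)
    (hne : ∀ u w : ℝ, |w| ≤ 1 / 2 → w ≠ 0 → γ (u + w) ≠ γ u)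
    (hint : Integrable (fun p : ℝ × ℝ => ohVariation α γ h p.1 p.2) torusMeasure) {ε : ℝ}
    (hε : 0 < ε) :
    ∫ u in Ioc (0 : ℝ) 1, ∫ w in Wset ε, pvIntegrand α γ h u w
      = ∫ p in {p : ℝ × ℝ | ε ≤ |p.2|}, ohVariation α γ h p.1 p.2 ∂torusMeasure := by
  have hV := hint.restrict (s := {p : ℝ × ℝ | ε ≤ |p.2|})
  rw [torusMeasure_restrict hε] at hV ⊢
  have hP := integrable_pvIntegrand (α := α) hγ hh hne hε
  have hD : Integrable (fun p : ℝ × ℝ => ohVariation α γ h p.1 p.2 - pvIntegrand α γ h p.1 p.2)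
      ((volume.restrict (Ioc (0 : ℝ) 1)).prod (volume.restrict (Wset ε))) := hV.sub hP
  rw [← integral_prod _ hP, ← sub_eq_zero, ← neg_eq_zero, neg_sub, ← integral_sub hV hP,
    integral_prod_symm _ hD]
  have hslice : ∀ w ∈ Wset ε,
      (∫ u in Ioc (0 : ℝ) 1, (ohVariation α γ h u w - pvIntegrand α γ h u w))
        = (∫ u in (0 : ℝ)..1, ⟪deriv γ u, deriv h u⟫ / ‖γ (u + -w) - γ u‖ ^ α)
          - ∫ u in (0 : ℝ)..1, ⟪deriv γ u, deriv h u⟫ / ‖γ (u + w) - γ u‖ ^ α := fun w hw => by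
    have hw' := (mem_Wset_iff hε).1 hw
    rw [← intervalIntegral.integral_of_le zero_le_one]
    exact integral_ohVariation_sub_pvIntegrand hγ hh hγp hhp fun u =>
      hne u w hw'.2 (abs_pos.1 (hε.trans_le hw'.1))
  refine (setIntegral_congr_fun (isCompact_Wset ε).measurableSet hslice).trans ?_
  exact integral_Wset_eq_zero_of_odd hε fun w => by rw [neg_neg, neg_sub]

lemma aecover_torusMeasure :
    AECover torusMeasure (𝓝[>] (0 : ℝ)) (fun ε => {p : ℝ × ℝ | ε ≤ |p.2|}) where
  ae_eventually_mem := by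
    filter_upwards [ae_torusMeasure] with p hp
    filter_upwards [mem_nhdsWithin_of_mem_nhds (Iic_mem_nhds (abs_pos.2 hp.1))] with ε hε
    exact hε
  measurableSet ε := (isClosed_le continuous_const continuous_snd.abs).measurableSet

end PrincipalValue

/-- For `α ∈ (2,3)`, an injective arc-length curve `γ ∈ H^{(1+α)/2,2}` and any
direction `h ∈ H^{(1+α)/2,2}`, the directional derivative of `E^α` at `γ` in direction `h`
exists and is given by the stated principal value. -/
theorem statement1 {n : ℕ} (hn : 2 ≤ n) {α : ℝ} (hα : α ∈ Ioo (2:ℝ) 3)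
    {γ : ℝ → Rn n} (hγ : MemH1 ((α - 1) / 2) γ) (hinj : PerInjective γ)
    (harc : ArcLengthParam γ) :
    ∀ h : ℝ → Rn n, MemH1 ((α - 1) / 2) h →
      ∃ d : ℝ,
        HasDirDeriv (oharaER α) γ h d ∧
        Tendsto (fun ε : ℝ => ∫ u in Ioc (0:ℝ) 1, ∫ w in Wset ε,
            ((α - 2) * ⟪deriv γ u, deriv h u⟫ / |w| ^ α
              + 2 * ⟪deriv γ u, deriv h u⟫ / ‖γ (u + w) - γ u‖ ^ α
              - α * ⟪γ (u + w) - γ u, h (u + w) - h u⟫ / ‖γ (u + w) - γ u‖ ^ (α + 2)))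
          (𝓝[>] (0:ℝ)) (𝓝 d) := by
  intro h hh
  obtain ⟨hint, hder⟩ := hasDerivAt_oharaER (by linarith [hα.1]) hγ hinj harc hh
  refine ⟨∫ p, ohVariation α γ h p.1 p.2 ∂torusMeasure, ?_, ?_⟩
  · simpa [HasDirDeriv, slope_fun_def_field] using hasDerivAt_iff_tendsto_slope.1 hder
  · refine (aecover_torusMeasure.integral_tendsto_of_countably_generated hint).congr' ?_
    filter_upwards [self_mem_nhdsWithin] with ε hε
    refine (integral_pvIntegrand hγ.2.1 hh.2.1 hγ.1 hh.1 (fun u w hw h0 he => ?_) hint hε).symm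
    obtain ⟨k, hk⟩ := hinj _ _ he
    have hk' : |(k : ℝ)| < 1 := by
      rw [show (k : ℝ) = -w by linarith, abs_neg]
      linarith
    have hk0 : k = 0 := Int.abs_lt_one_iff.1 (by exact_mod_cast hk')
    refine h0 ?_
    rw [hk0] at hk
    simpa using hk

end
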